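/- arXiv:2206.06232 — 8 statements merged into one kernel-verified Lean document; each statement's English description precedes it below -/
import Mathlib

section
/- Let L : ℝ^d → ℝ be differentiable and β-smooth with β > 0, and let 0 ≤ γ ≤ 1/β and ρ ≥ 0. For any w ∈ ℝ^d, the full-batch SAM step w⁺ = w − γ∇L(w + ρ∇L(w)) satisfies L(w⁺) ≤ L(w) − γ(1 − ρβ)(1 − (γβ/2)(1 − ρβ))·‖∇L(w)‖². -/
open scoped RealInnerProductSpace

theorem sam_descent_aux {d : ℕ}
    (L : EuclideanSpace ℝ (Fin d) → ℝ)
    (g : EuclideanSpace ℝ (Fin d) → EuclideanSpace ℝ (Fin d))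
    (hg : ∀ x, HasGradientAt L (g x) x)
    (β : ℝ) (hLip : ∀ x y, ‖g x - g y‖ ≤ β * ‖x - y‖)
    (w v : EuclideanSpace ℝ (Fin d)) :
    L (w + v) ≤ L w + ⟪g w, v⟫ + β / 2 * ‖v‖ ^ 2 := by
  have hd : ∀ t : ℝ, HasDerivAt
      (fun t : ℝ => L (w + t • v) - t * ⟪g w, v⟫ - β / 2 * ‖v‖ ^ 2 * t ^ 2)
      (⟪g (w + t • v), v⟫ - ⟪g w, v⟫ - β / 2 * ‖v‖ ^ 2 * (2 * t)) t := by
    intro t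
    have h1 : HasDerivAt (fun t : ℝ => w + t • v) v t := by
      simpa using ((hasDerivAt_id t).smul_const v).const_add w
    have h2 : HasDerivAt (fun t : ℝ => L (w + t • v)) ⟪g (w + t • v), v⟫ t := by
      have := (hg (w + t • v)).hasFDerivAt.comp_hasDerivAt t h1
      rw [InnerProductSpace.toDual_apply_apply] at this
      exact this
    have h3 : HasDerivAt (fun t : ℝ => t * ⟪g w, v⟫) ⟪g w, v⟫ t := by
      simpa using (hasDerivAt_id t).mul_const ⟪g w, v⟫
    have h4 : HasDerivAt (fun t : ℝ => β / 2 * ‖v‖ ^ 2 * t ^ 2)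
        (β / 2 * ‖v‖ ^ 2 * (2 * t)) t := by
      simpa using (hasDerivAt_pow 2 t).const_mul (β / 2 * ‖v‖ ^ 2)
    exact (h2.sub h3).sub h4
  have ha := antitoneOn_of_deriv_nonpos (convex_Icc (0 : ℝ) 1)
    (fun t _ => (hd t).continuousAt.continuousWithinAt)
    (fun t _ => (hd t).differentiableAt.differentiableWithinAt)
    (by
      intro t ht
      rw [interior_Icc] at ht
      rw [(hd t).deriv, ← inner_sub_left]
      have h1 := real_inner_le_norm (g (w + t • v) - g w) v
      have h2 := hLip (w + t • v) w
      rw [add_sub_cancel_left, norm_smul, Real.norm_of_nonneg ht.1.le] at h2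
      have h3 := mul_le_mul_of_nonneg_right h2 (norm_nonneg v)
      nlinarith)
  have := ha (Set.left_mem_Icc.2 zero_le_one) (Set.right_mem_Icc.2 zero_le_one) zero_le_one
  simp at this
  linarith

/-- If `L : ℝ^d → ℝ` is differentiable and `β`-smooth (`β > 0`),
`0 ≤ γ ≤ 1/β` and `ρ ≥ 0`, then the full-batch SAM step `w⁺ = w − γ∇L(w + ρ∇L(w))`
satisfies `L(w⁺) ≤ L(w) − γ(1 − ρβ)(1 − (γβ/2)(1 − ρβ))‖∇L(w)‖²`. -/
theorem sam_descent_smooth {d : ℕ}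
    (L : EuclideanSpace ℝ (Fin d) → ℝ)
    (g : EuclideanSpace ℝ (Fin d) → EuclideanSpace ℝ (Fin d))
    (hg : ∀ x, HasGradientAt L (g x) x)
    (β : ℝ) (hβ : 0 < β) (hLip : LipschitzWith β.toNNReal g)
    (γ ρ : ℝ) (hγ0 : 0 ≤ γ) (hγ1 : γ ≤ 1 / β) (hρ : 0 ≤ ρ)
    (w : EuclideanSpace ℝ (Fin d)) :
    L (w - γ • g (w + ρ • g w)) ≤
      L w - γ * (1 - ρ * β) * (1 - γ * β / 2 * (1 - ρ * β)) * ‖g w‖ ^ 2 := by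
  have hL : ∀ x y, ‖g x - g y‖ ≤ β * ‖x - y‖ := by
    intro x y
    have := hLip.norm_sub_le x y
    rwa [Real.coe_toNNReal β hβ.le] at this
  have h := sam_descent_aux L g hg β hL w (-(γ • g (w + ρ • g w)))
  have he := hL (w + ρ • g w) w
  rw [add_sub_cancel_left, norm_smul, Real.norm_of_nonneg hρ] at he
  rw [← sub_eq_add_neg] at h
  refine h.trans ?_
  have hγβ : γ * β ≤ 1 := by rwa [le_div_iff₀ hβ] at hγ1
  obtain ⟨e, hb⟩ : ∃ e, g (w + ρ • g w) = g w + e := ⟨_, (add_sub_cancel _ _).symm⟩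
  rw [hb] at he ⊢
  rw [add_sub_cancel_left] at he
  generalize g w = a at *
  rw [norm_neg, norm_smul, Real.norm_of_nonneg hγ0, inner_neg_right, inner_smul_right,
    inner_add_right, mul_pow, norm_add_sq_real, real_inner_self_eq_norm_sq]
  have h1 : -⟪a, e⟫ ≤ ρ * β * ‖a‖ ^ 2 := by
    have := neg_le_of_abs_le (abs_real_inner_le_norm a e)
    nlinarith [mul_le_mul_of_nonneg_left he (norm_nonneg a)]
  have h2 : ‖e‖ ^ 2 ≤ (ρ * β) ^ 2 * ‖a‖ ^ 2 := by
    have := pow_le_pow_left₀ (norm_nonneg e) he 2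
    linarith
  have h3 := mul_le_mul_of_nonneg_left h1 (mul_nonneg hγ0 (sub_nonneg.2 hγβ))
  have h4 := mul_le_mul_of_nonneg_left h2 (by positivity : 0 ≤ β * γ ^ 2 / 2)
  linarith
end

section
/- Let L : ℝ^d → ℝ be differentiable and β-smooth with β > 0, and let 0 < γ < 1/β and 0 ≤ ρ < 1/β. Define the full-batch SAM iterates by w_{t+1} = w_t − γ∇L(w_t + ρ∇L(w_t)) from any w_0 ∈ ℝ^d. Then for every T ≥ 1, (1/T)·∑_{t=0}^{T−1} ‖∇L(w_t)‖² ≤ (L(w_0) − L(w_T)) / (T·γ·(1 − ρβ)·(1 − (γβ/2)(1 − ρβ))). -/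
open scoped RealInnerProductSpace

theorem sam_descent {d : ℕ}
    (L : EuclideanSpace ℝ (Fin d) → ℝ)
    (g : EuclideanSpace ℝ (Fin d) → EuclideanSpace ℝ (Fin d))
    (hg : ∀ x, HasGradientAt L (g x) x)
    (β : ℝ) (hL : ∀ x y, ‖g x - g y‖ ≤ β * ‖x - y‖)
    (x v : EuclideanSpace ℝ (Fin d)) :
    L (x + v) ≤ L x + ⟪g x, v⟫ + β / 2 * ‖v‖ ^ 2 := by
  have hd : ∀ t : ℝ, HasDerivAt
      (fun t : ℝ => L (x + t • v) - t * ⟪g x, v⟫ - β / 2 * ‖v‖ ^ 2 * t ^ 2)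
      (⟪g (x + t • v), v⟫ - ⟪g x, v⟫ - β / 2 * ‖v‖ ^ 2 * (2 * t)) t := by
    intro t
    have h1 : HasDerivAt (fun t : ℝ => x + t • v) v t := by
      simpa using ((hasDerivAt_id t).smul_const v).const_add x
    have h2 : HasDerivAt (fun t : ℝ => L (x + t • v)) ⟪g (x + t • v), v⟫ t := by
      have := (hg (x + t • v)).hasFDerivAt.comp_hasDerivAt t h1
      rw [InnerProductSpace.toDual_apply_apply] at this
      exact this
    have h3 : HasDerivAt (fun t : ℝ => t * ⟪g x, v⟫) ⟪g x, v⟫ t := by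
      simpa using (hasDerivAt_id t).mul_const ⟪g x, v⟫
    have h4 : HasDerivAt (fun t : ℝ => β / 2 * ‖v‖ ^ 2 * t ^ 2)
        (β / 2 * ‖v‖ ^ 2 * (2 * t)) t := by
      simpa using (hasDerivAt_pow 2 t).const_mul (β / 2 * ‖v‖ ^ 2)
    exact (h2.sub h3).sub h4
  have ha := antitoneOn_of_deriv_nonpos (convex_Icc (0 : ℝ) 1)
    (fun t _ => (hd t).continuousAt.continuousWithinAt)
    (fun t _ => (hd t).differentiableAt.differentiableWithinAt)
    (by
      intro t ht
      rw [interior_Icc] at ht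
      rw [(hd t).deriv, ← inner_sub_left]
      have h1 := real_inner_le_norm (g (x + t • v) - g x) v
      have h2 := hL (x + t • v) x
      rw [add_sub_cancel_left, norm_smul, Real.norm_of_nonneg ht.1.le] at h2
      nlinarith [mul_le_mul_of_nonneg_right h2 (norm_nonneg v)])
  have := ha (Set.left_mem_Icc.2 zero_le_one) (Set.right_mem_Icc.2 zero_le_one) zero_le_one
  simp at this
  linarith

theorem sam_step {E : Type*} [NormedAddCommGroup E] [InnerProductSpace ℝ E]
    (u h : E) (a b : ℝ) (ha : 0 ≤ a) (hb0 : 0 ≤ b) (hb : b ≤ 1) (hh : ‖h - u‖ ≤ a * ‖u‖) :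
    (1 - a) * (1 - b / 2 * (1 - a)) * ‖u‖ ^ 2 ≤ ⟪u, h⟫ - b / 2 * ‖h‖ ^ 2 := by
  obtain ⟨e, rfl⟩ : ∃ e, h = u + e := ⟨h - u, by simp⟩
  rw [add_sub_cancel_left] at hh
  have h1 := (abs_le.1 (abs_real_inner_le_norm u e)).1
  rw [inner_add_right, norm_add_sq_real, real_inner_self_eq_norm_sq]
  have h2 : ‖e‖ ^ 2 ≤ (a * ‖u‖) ^ 2 := by gcongr
  have h3 : -(a * ‖u‖ ^ 2) ≤ ⟪u, e⟫ := by
    nlinarith [mul_le_mul_of_nonneg_left hh (norm_nonneg u)]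
  have h4 := mul_le_mul_of_nonneg_left h3 (sub_nonneg.2 hb)
  have h5 := mul_le_mul_of_nonneg_left h2 hb0
  linarith

/-- Convergence of full-batch SAM to stationary points: if `L` is
differentiable and `β`-smooth (`β > 0`), `0 < γ < 1/β`, `0 ≤ ρ < 1/β`, and the iterates
satisfy `w_{t+1} = w_t − γ∇L(w_t + ρ∇L(w_t))`, then for every `T ≥ 1`,
`(1/T)·∑_{t<T} ‖∇L(w_t)‖² ≤ (L(w_0) − L(w_T)) / (T·γ·(1 − ρβ)·(1 − (γβ/2)(1 − ρβ)))`. -/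
theorem sam_fullbatch_convergence_nonconvex {d : ℕ}
    (L : EuclideanSpace ℝ (Fin d) → ℝ)
    (g : EuclideanSpace ℝ (Fin d) → EuclideanSpace ℝ (Fin d))
    (hg : ∀ x, HasGradientAt L (g x) x)
    (β : ℝ) (hβ : 0 < β) (hLip : LipschitzWith β.toNNReal g)
    (γ ρ : ℝ) (hγ0 : 0 < γ) (hγ1 : γ < 1 / β) (hρ0 : 0 ≤ ρ) (hρ1 : ρ < 1 / β)
    (w : ℕ → EuclideanSpace ℝ (Fin d))
    (hrec : ∀ t : ℕ, w (t + 1) = w t - γ • g (w t + ρ • g (w t)))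
    (T : ℕ) (hT : 1 ≤ T) :
    (1 / (T : ℝ)) * ∑ t ∈ Finset.range T, ‖g (w t)‖ ^ 2 ≤
      (L (w 0) - L (w T)) / ((T : ℝ) * γ * (1 - ρ * β) * (1 - γ * β / 2 * (1 - ρ * β))) := by
  have hL : ∀ x y, ‖g x - g y‖ ≤ β * ‖x - y‖ := by
    intro x y
    have := hLip.norm_sub_le x y
    rwa [Real.coe_toNNReal _ hβ.le] at this
  have hb : γ * β < 1 := (lt_div_iff₀ hβ).1 hγ1
  have hc : ρ * β < 1 := (lt_div_iff₀ hβ).1 hρ1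
  have hγβ : 0 < γ * β := by positivity
  have hρβ : 0 ≤ ρ * β := by positivity
  set c := (1 - ρ * β) * (1 - γ * β / 2 * (1 - ρ * β)) with hcdef
  have hcpos : 0 < c := by
    apply mul_pos (by linarith)
    nlinarith [mul_nonneg hγβ.le hρβ]
  have step : ∀ t, γ * c * ‖g (w t)‖ ^ 2 ≤ L (w t) - L (w (t + 1)) := by
    intro t
    have h1 := sam_descent L g hg β hL (w t) (-(γ • g (w t + ρ • g (w t))))
    rw [← sub_eq_add_neg, ← hrec, inner_neg_right, inner_smul_right, norm_neg, norm_smul,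
      Real.norm_of_nonneg hγ0.le] at h1
    have h2 := hL (w t + ρ • g (w t)) (w t)
    rw [add_sub_cancel_left, norm_smul, Real.norm_of_nonneg hρ0] at h2
    have h3 := sam_step (g (w t)) (g (w t + ρ • g (w t))) (ρ * β) (γ * β) hρβ hγβ.le hb.le
      (by linarith)
    have h4 := mul_le_mul_of_nonneg_left h3 hγ0.le
    rw [← hcdef] at h4
    linarith
  have hsum : γ * c * ∑ t ∈ Finset.range T, ‖g (w t)‖ ^ 2 ≤ L (w 0) - L (w T) := by
    rw [Finset.mul_sum, ← Finset.sum_range_sub' (fun t => L (w t))]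
    exact Finset.sum_le_sum fun t _ => step t
  have hTpos : (0 : ℝ) < T := by exact_mod_cast hT
  have hden : (T : ℝ) * γ * (1 - ρ * β) * (1 - γ * β / 2 * (1 - ρ * β)) = T * (γ * c) := by
    rw [hcdef]; ring
  rw [hden, le_div_iff₀ (by positivity)]
  calc _ = γ * c * ∑ t ∈ Finset.range T, ‖g (w t)‖ ^ 2 := by field_simp
    _ ≤ _ := hsum
end

section
/- Let L : ℝ^d → ℝ be differentiable, convex, and β-smooth with β > 0, and let w* be a global minimizer of L with L* = L(w*). Let γ > 0 and ρ > 0 satisfy γβ(1 + ρβ) < 2, and define the full-batch SAM iterates w_{t+1} = w_t − γ∇L(w_t + ρ∇L(w_t)) from any w_0 ∈ ℝ^d. Then for every T ≥ 1, with w̄_T = (1/T)∑_{t=0}^{T−1} w_t, one has L(w̄_T) − L* ≤ (2ρβ + 1)·‖w_0 − w*‖² / (γ·(2 − γβ(1 + ρβ))·T). -/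
open scoped RealInnerProductSpace

section aux
variable {E : Type*} [NormedAddCommGroup E] [InnerProductSpace ℝ E] [CompleteSpace E]

theorem aux_line (L : E → ℝ) (g : E → E) (hg : ∀ x, HasGradientAt L (g x) x) (x v : E) (t : ℝ) :
    HasDerivAt (fun t : ℝ => L (x + t • v)) ⟪g (x + t • v), v⟫ t := by
  have h1 : HasDerivAt (fun t : ℝ => x + t • v) v t := by
    simpa using ((hasDerivAt_id t).smul_const v).const_add x
  have h2 := (hg (x + t • v)).hasFDerivAt.comp_hasDerivAt t h1
  simp only [InnerProductSpace.toDual_apply_apply] at h2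
  exact h2

theorem aux_grad (L : E → ℝ) (g : E → E) (hg : ∀ x, HasGradientAt L (g x) x)
    (hconv : ConvexOn ℝ Set.univ L) (x y : E) : L x + ⟪g x, y - x⟫ ≤ L y := by
  have hc : ConvexOn ℝ Set.univ (fun t : ℝ => L (x + t • (y - x))) := by
    refine ⟨convex_univ, fun a _ b _ p q hp hq hpq => ?_⟩
    have := hconv.2 (Set.mem_univ (x + a • (y - x))) (Set.mem_univ (x + b • (y - x))) hp hq hpq
    have e : x + (p • a + q • b) • (y - x)
        = p • (x + a • (y - x)) + q • (x + b • (y - x)) := by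
      have : p = 1 - q := by linarith
      subst this
      simp only [smul_eq_mul]
      module
    simp only [e]
    exact this
  have hd := aux_line L g hg x (y - x) 0
  have := hc.le_slope_of_hasDerivAt (Set.mem_univ 0) (Set.mem_univ 1) one_pos hd
  simp [slope_def_field] at this
  linarith

theorem aux_desc (L : E → ℝ) (g : E → E) (hg : ∀ x, HasGradientAt L (g x) x)
    (β : ℝ) (hLip : ∀ x y, ‖g x - g y‖ ≤ β * ‖x - y‖) (x y : E) :
    L y ≤ L x + ⟪g x, y - x⟫ + β / 2 * ‖y - x‖ ^ 2 := by
  set v := y - x with hv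
  have hd : ∀ t : ℝ, HasDerivAt
      (fun t : ℝ => L (x + t • v) - t * ⟪g x, v⟫ - β / 2 * ‖v‖ ^ 2 * t ^ 2)
      (⟪g (x + t • v), v⟫ - ⟪g x, v⟫ - β * ‖v‖ ^ 2 * t) t := by
    intro t
    have h := ((aux_line L g hg x v t).sub ((hasDerivAt_id t).mul_const ⟪g x, v⟫)).sub
      ((hasDerivAt_pow 2 t).const_mul (β / 2 * ‖v‖ ^ 2))
    refine h.congr_deriv ?_
    push_cast
    ring
  have hanti : AntitoneOn
      (fun t : ℝ => L (x + t • v) - t * ⟪g x, v⟫ - β / 2 * ‖v‖ ^ 2 * t ^ 2) (Set.Icc 0 1) := by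
    apply antitoneOn_of_deriv_nonpos (convex_Icc 0 1)
    · exact fun t _ => (hd t).continuousAt.continuousWithinAt
    · exact fun t _ => (hd t).differentiableAt.differentiableWithinAt
    · intro t ht
      rw [interior_Icc] at ht
      rw [(hd t).deriv, ← inner_sub_left]
      have h1 := real_inner_le_norm (g (x + t • v) - g x) v
      have h2 := hLip (x + t • v) x
      rw [add_sub_cancel_left, norm_smul, Real.norm_of_nonneg ht.1.le] at h2
      have h3 := mul_le_mul_of_nonneg_right h2 (norm_nonneg v)
      nlinarith
  have := hanti (Set.left_mem_Icc.2 zero_le_one) (Set.right_mem_Icc.2 zero_le_one) zero_le_one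
  have e : x + v = y := by simp [hv]
  simp [e] at this
  linarith

theorem aux_coco (L : E → ℝ) (g : E → E) (hg : ∀ x, HasGradientAt L (g x) x)
    (hconv : ConvexOn ℝ Set.univ L)
    (β : ℝ) (hβ : 0 < β) (hLip : ∀ x y, ‖g x - g y‖ ≤ β * ‖x - y‖) (x y : E) :
    L x + ⟪g x, y - x⟫ + ‖g y - g x‖ ^ 2 / (2 * β) ≤ L y := by
  have h1 := aux_grad L g hg hconv x (y - β⁻¹ • (g y - g x))
  have h2 := aux_desc L g hg β hLip y (y - β⁻¹ • (g y - g x))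
  have e1 : y - β⁻¹ • (g y - g x) - x = (y - x) - β⁻¹ • (g y - g x) := by abel
  have e2 : y - β⁻¹ • (g y - g x) - y = - (β⁻¹ • (g y - g x)) := by abel
  rw [e1, inner_sub_right, inner_smul_right] at h1
  rw [e2, inner_neg_right, inner_smul_right, norm_neg, norm_smul, mul_pow,
    Real.norm_of_nonneg (inv_nonneg.2 hβ.le)] at h2
  have h3 : ⟪g y, g y - g x⟫ - ⟪g x, g y - g x⟫ = ‖g y - g x‖ ^ 2 := by
    rw [← inner_sub_left, real_inner_self_eq_norm_sq]
  have h4 : β / 2 * (β⁻¹ ^ 2 * ‖g y - g x‖ ^ 2) = ‖g y - g x‖ ^ 2 / (2 * β) := by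
    field_simp
  have h5 : β⁻¹ * ⟪g y, g y - g x⟫ - β⁻¹ * ⟪g x, g y - g x⟫ = 2 * (‖g y - g x‖ ^ 2 / (2 * β)) := by
    rw [← mul_sub, h3]; field_simp
  linarith

theorem aux_step (L : E → ℝ) (g : E → E) (hg : ∀ x, HasGradientAt L (g x) x)
    (hconv : ConvexOn ℝ Set.univ L)
    (β : ℝ) (hβ : 0 < β) (hLip : ∀ x y, ‖g x - g y‖ ≤ β * ‖x - y‖)
    (s : E) (hs : g s = 0) (γ ρ : ℝ) (hγ : 0 < γ) (hρ : 0 < ρ)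
    (hstep : γ * β * (1 + ρ * β) < 2) (x x' : E) (hx : x' = x - γ • g (x + ρ • g x)) :
    γ * (2 - γ * β * (1 + ρ * β)) * (L x - L s) ≤
      (‖x - s‖ ^ 2 + 2 * ρ * (L x - L s)) - (‖x' - s‖ ^ 2 + 2 * ρ * (L x' - L s)) := by
  have c1 := aux_coco L g hg hconv β hβ hLip (x + ρ • g x) s
  have c2 := aux_coco L g hg hconv β hβ hLip x (x + ρ • g x)
  have c3 := aux_coco L g hg hconv β hβ hLip s x
  have c4 := aux_desc L g hg β hLip x x'
  have c5 := hLip (x + ρ • g x) x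
  set h := g (x + ρ • g x) with hh
  have e1 : s - (x + ρ • g x) = - (x - s) - ρ • g x := by abel
  have e2 : x' - x = - (γ • h) := by rw [hx]; abel
  have e3 : x' - s = (x - s) - γ • h := by rw [hx]; abel
  rw [hs, e1, inner_sub_right, inner_neg_right, inner_smul_right, zero_sub, norm_neg] at c1
  rw [add_sub_cancel_left, inner_smul_right, real_inner_self_eq_norm_sq] at c2
  rw [hs, inner_zero_left, sub_zero] at c3
  rw [e2, inner_neg_right, inner_smul_right, norm_neg, norm_smul, Real.norm_of_nonneg hγ.le,
    real_inner_comm] at c4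
  rw [add_sub_cancel_left, norm_smul, Real.norm_of_nonneg hρ.le] at c5
  rw [e3, norm_sub_sq_real (x - s), inner_smul_right, norm_smul, Real.norm_of_nonneg hγ.le,
    real_inner_comm]
  have e4 : ‖h - g x‖ ^ 2 = ‖h‖ ^ 2 - 2 * ⟪h, g x⟫ + ‖g x‖ ^ 2 := norm_sub_sq_real _ _
  have c6 : ⟪h, g x⟫ ≤ (1 + ρ * β) * ‖g x‖ ^ 2 := by
    have i1 := real_inner_le_norm (h - g x) (g x)
    rw [inner_sub_left, real_inner_self_eq_norm_sq] at i1
    have i2 := mul_le_mul_of_nonneg_right c5 (norm_nonneg (g x))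
    nlinarith
  have hn := sq_nonneg ‖h - g x‖
  have hG := sq_nonneg ‖g x‖
  have hH := sq_nonneg ‖h‖
  generalize ⟪h, x - s⟫ = P at *
  generalize ⟪h, g x⟫ = I at *
  generalize ‖h - g x‖ ^ 2 = N at *
  rw [mul_pow] at c4 ⊢
  generalize ‖g x‖ ^ 2 = G at *
  generalize ‖h‖ ^ 2 = H at *
  subst e4
  set q := γ * β * (1 + ρ * β) with hq
  have hq0 : 0 < q := by positivity
  have k1 : 0 ≤ q / 2 * G + 2 * (ρ * β) * G + (1 - q) * H + (H - 2 * I + G) := by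
    -- linear in q : (1 - q/2) * (value at 0) + q/2 * (value at 2)
    have v0 : 0 ≤ 2 * (ρ * β) * G + H + (H - 2 * I + G) := by
      have : 0 ≤ 2 * (ρ * β) * G := by positivity
      linarith
    have v2 : 0 ≤ G + 2 * (ρ * β) * G - H + (H - 2 * I + G) := by linarith
    have := mul_nonneg (by linarith : 0 ≤ 1 - q / 2) v0
    have := mul_nonneg (by linarith : 0 ≤ q / 2) v2
    nlinarith
  have k2 : 0 ≤ q * (G / (2 * β)) + 2 * ρ * G + (1 - q) * H / β + (H - 2 * I + G) / β := by
    have := div_nonneg k1 hβ.le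
    have e : (q / 2 * G + 2 * (ρ * β) * G + (1 - q) * H + (H - 2 * I + G)) / β
      = q * (G / (2 * β)) + 2 * ρ * G + (1 - q) * H / β + (H - 2 * I + G) / β := by
      field_simp
    linarith
  have k3 : q * (G / (2 * β)) ≤ q * (L x - L s) :=
    mul_le_mul_of_nonneg_left (by linarith) hq0.le
  have k4 : L x - L s + ρ * G - ρ * I + H / (2 * β) + (H - 2 * I + G) / (2 * β) ≤ P := by linarith
  have f1 : H / (2 * β) = H / β / 2 := by field_simp
  have f2 : (H - 2 * I + G) / (2 * β) = (H - 2 * I + G) / β / 2 := by field_simp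
  have f3 : (1 - q) * H / β = H / β - γ * (1 + ρ * β) * H := by rw [hq]; field_simp
  rw [f1, f2] at k4
  rw [f3] at k2
  have k5 : (2 - q) * (L x - L s) ≤ 2 * P - γ * (1 + ρ * β) * H + 2 * ρ * I := by linarith
  have k6 := mul_le_mul_of_nonneg_left k5 hγ.le
  have k7 := mul_le_mul_of_nonneg_left c4 hρ.le
  clear_value q
  nlinarith
end aux

/-- Convergence of full-batch SAM for convex `β`-smooth functions:
with a global minimizer `w*`, step sizes `γ, ρ > 0` with `γβ(1 + ρβ) < 2`, and iterates
`w_{t+1} = w_t − γ∇L(w_t + ρ∇L(w_t))`, for every `T ≥ 1` the averaged iterate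
`w̄_T = (1/T)∑_{t<T} w_t` satisfies
`L(w̄_T) − L* ≤ (2ρβ + 1)‖w_0 − w*‖² / (γ(2 − γβ(1 + ρβ))T)`. -/
theorem sam_fullbatch_convergence_convex {d : ℕ}
    (L : EuclideanSpace ℝ (Fin d) → ℝ)
    (g : EuclideanSpace ℝ (Fin d) → EuclideanSpace ℝ (Fin d))
    (hg : ∀ x, HasGradientAt L (g x) x)
    (hconv : ConvexOn ℝ Set.univ L)
    (β : ℝ) (hβ : 0 < β) (hLip : LipschitzWith β.toNNReal g)
    (wstar : EuclideanSpace ℝ (Fin d)) (hmin : ∀ v, L wstar ≤ L v)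
    (γ ρ : ℝ) (hγ : 0 < γ) (hρ : 0 < ρ)
    (hstep : γ * β * (1 + ρ * β) < 2)
    (w : ℕ → EuclideanSpace ℝ (Fin d))
    (hrec : ∀ t : ℕ, w (t + 1) = w t - γ • g (w t + ρ • g (w t)))
    (T : ℕ) (hT : 1 ≤ T) :
    L ((1 / (T : ℝ)) • ∑ t ∈ Finset.range T, w t) - L wstar ≤
      (2 * ρ * β + 1) * ‖w 0 - wstar‖ ^ 2 / (γ * (2 - γ * β * (1 + ρ * β)) * T) := by
  have hLip' : ∀ x y, ‖g x - g y‖ ≤ β * ‖x - y‖ := by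
    intro x y
    have := hLip.norm_sub_le x y
    rwa [Real.coe_toNNReal β hβ.le] at this
  have hs : g wstar = 0 := by
    have h1 : IsLocalMin L wstar := Filter.Eventually.of_forall hmin
    have h2 := h1.hasFDerivAt_eq_zero (hg wstar).hasFDerivAt
    simpa using h2
  have hstp := fun t => aux_step L g hg hconv β hβ hLip' wstar hs γ ρ hγ hρ hstep (w t) (w (t+1))
    (hrec t)
  set κ := γ * (2 - γ * β * (1 + ρ * β)) with hκ
  have hκ0 : 0 < κ := mul_pos hγ (by linarith)
  have hsum : ∀ n : ℕ, κ * ∑ t ∈ Finset.range n, (L (w t) - L wstar) ≤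
      (‖w 0 - wstar‖ ^ 2 + 2 * ρ * (L (w 0) - L wstar))
        - (‖w n - wstar‖ ^ 2 + 2 * ρ * (L (w n) - L wstar)) := by
    intro n
    induction n with
    | zero => simp
    | succ k ih =>
      rw [Finset.sum_range_succ, mul_add]
      linarith [hstp k]
  have hT0 : (0 : ℝ) < T := by exact_mod_cast hT
  have h0 := aux_desc L g hg β hLip' wstar (w 0)
  rw [hs, inner_zero_left] at h0
  have hJ : L ((1 / (T : ℝ)) • ∑ t ∈ Finset.range T, w t) ≤
      ∑ t ∈ Finset.range T, (1 / (T : ℝ)) * L (w t) := by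
    rw [Finset.smul_sum]
    refine hconv.map_sum_le (fun _ _ => by positivity) ?_ (fun _ _ => Set.mem_univ _)
    simp [hT0.ne']
  rw [← Finset.mul_sum] at hJ
  have hS := hsum T
  rw [Finset.sum_sub_distrib, Finset.sum_const, Finset.card_range, nsmul_eq_mul] at hS
  have p1 : 0 ≤ 2 * ρ * (L (w T) - L wstar) := mul_nonneg (by positivity) (by linarith [hmin (w T)])
  have p2 : 2 * ρ * (L (w 0) - L wstar) ≤ 2 * ρ * (β / 2 * ‖w 0 - wstar‖ ^ 2) :=
    mul_le_mul_of_nonneg_left (by linarith) (by positivity)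
  have p3 : 0 ≤ ρ * β * ‖w 0 - wstar‖ ^ 2 := by positivity
  have p4 := sq_nonneg ‖w T - wstar‖
  rw [le_div_iff₀ (by positivity)]
  calc _ ≤ (1 / (T : ℝ) * ∑ t ∈ Finset.range T, L (w t) - L wstar) * (κ * T) :=
        mul_le_mul_of_nonneg_right (by linarith) (by positivity)
    _ = κ * (∑ t ∈ Finset.range T, L (w t) - T * L wstar) := by field_simp
    _ ≤ _ := by linarith
end

section
/- Assume each ℓ_i is differentiable, ∇L is β-Lipschitz with β > 0, and the bounded variance condition (A1) holds with constant σ ≥ 0. Fix a batch size b ≥ 1, a point w ∈ ℝ^d, and ρ ≥ 0. Then, averaging uniformly over all pairs of batches (I, J) ∈ {1,…,n}^b × {1,…,n}^b, E_{I,J}⟨∇L_I(w + ρ∇L_J(w)), ∇L(w)⟩ ≥ (1/2 − βρ)·‖∇L(w)‖² − β²ρ²σ²/(2b). -/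
open scoped RealInnerProductSpace

/-- The full (training) loss `L(w) = (1/n) ∑ᵢ ℓᵢ(w)`. -/
noncomputable def fullLoss {d n : ℕ} (ℓ : Fin n → EuclideanSpace ℝ (Fin d) → ℝ)
    (w : EuclideanSpace ℝ (Fin d)) : ℝ :=
  (n : ℝ)⁻¹ * ∑ i, ℓ i w

/-- The full gradient `∇L(w) = (1/n) ∑ᵢ ∇ℓᵢ(w)` (given per-example gradients `g i`). -/
noncomputable def fullGrad {d n : ℕ}
    (g : Fin n → EuclideanSpace ℝ (Fin d) → EuclideanSpace ℝ (Fin d))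
    (w : EuclideanSpace ℝ (Fin d)) : EuclideanSpace ℝ (Fin d) :=
  (n : ℝ)⁻¹ • ∑ i, g i w

/-- The mini-batch gradient `∇L_J(w) = (1/b) ∑_{k<b} ∇ℓ_{J k}(w)` for a batch
`J : Fin b → Fin n` (sampling with replacement). -/
noncomputable def batchGrad {d n b : ℕ}
    (g : Fin n → EuclideanSpace ℝ (Fin d) → EuclideanSpace ℝ (Fin d))
    (J : Fin b → Fin n) (w : EuclideanSpace ℝ (Fin d)) : EuclideanSpace ℝ (Fin d) :=
  (b : ℝ)⁻¹ • ∑ k, g (J k) w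

theorem aux_cons {n b : ℕ} (F : (Fin (b+1) → Fin n) → ℝ) :
    ∑ J, F J = ∑ i : Fin n, ∑ J : Fin b → Fin n, F (Fin.cons i J) := by
  rw [← Fintype.sum_prod_type' (f := fun i J => F (Fin.cons i J))]
  exact (Equiv.sum_comp (Fin.consEquiv (fun _ : Fin (b+1) => Fin n)) F).symm

theorem aux_mean {n : ℕ} (f : Fin n → ℝ) (b : ℕ) :
    (n : ℝ) * ∑ J : Fin b → Fin n, ∑ k, f (J k) = b * (n : ℝ) ^ b * ∑ i, f i := by
  induction b with
  | zero => simp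
  | succ b ih =>
    rw [aux_cons]
    simp only [Fin.sum_univ_succ, Fin.cons_zero, Fin.cons_succ, Finset.sum_add_distrib,
      Finset.sum_const, Finset.card_univ, Fintype.card_fin, Fintype.card_fun, nsmul_eq_mul]
    rw [← Finset.mul_sum, mul_add, ih]
    push_cast
    ring

theorem aux_var {E : Type*} [NormedAddCommGroup E] [InnerProductSpace ℝ E]
    {n : ℕ} (h : Fin n → E) (h0 : ∑ i, h i = 0) (b : ℕ) :
    (n : ℝ) * ∑ J : Fin b → Fin n, ‖∑ k, h (J k)‖ ^ 2
      = b * (n : ℝ) ^ b * ∑ i, ‖h i‖ ^ 2 := by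
  induction b with
  | zero => simp
  | succ b ih =>
    rw [aux_cons]
    simp only [Fin.sum_univ_succ, Fin.cons_zero, Fin.cons_succ, norm_add_sq_real]
    have hc : ∑ i, ∑ J : Fin b → Fin n, 2 * ⟪h i, ∑ k, h (J k)⟫ = 0 := by
      rw [Finset.sum_comm]
      refine Finset.sum_eq_zero fun J _ => ?_
      rw [← Finset.mul_sum, ← sum_inner, h0]
      simp
    simp only [Finset.sum_add_distrib] at hc ⊢
    rw [hc]
    simp only [Finset.sum_const, Finset.card_univ, Fintype.card_fin, Fintype.card_fun,
      nsmul_eq_mul]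
    rw [← Finset.mul_sum, add_zero, mul_add, ih]
    push_cast
    ring

/-- Alignment of the stochastic n-SAM direction (different batches `I`, `J`
for the descent and ascent steps) with the full gradient: under bounded variance (A1) and
`β`-Lipschitzness of `∇L`, for every `w` and `ρ ≥ 0`, averaging uniformly over all pairs of
batches `(I, J) ∈ ({1,…,n}^b)²`,
`E⟨∇L_I(w + ρ∇L_J(w)), ∇L(w)⟩ ≥ (1/2 − βρ)‖∇L(w)‖² − β²ρ²σ²/(2b)`. -/
theorem nsam_stochastic_alignment {d n b : ℕ} (hn : 0 < n) (hb : 1 ≤ b)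
    (ℓ : Fin n → EuclideanSpace ℝ (Fin d) → ℝ)
    (g : Fin n → EuclideanSpace ℝ (Fin d) → EuclideanSpace ℝ (Fin d))
    (hg : ∀ i x, HasGradientAt (ℓ i) (g i x) x)
    (β : ℝ) (hβ : 0 < β) (hLip : LipschitzWith β.toNNReal (fullGrad g))
    (σ : ℝ) (hσ : 0 ≤ σ)
    (hvar : ∀ x, (n : ℝ)⁻¹ * ∑ i, ‖g i x - fullGrad g x‖ ^ 2 ≤ σ ^ 2)
    (w : EuclideanSpace ℝ (Fin d)) (ρ : ℝ) (hρ : 0 ≤ ρ) :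
    (1 / 2 - β * ρ) * ‖fullGrad g w‖ ^ 2 - β ^ 2 * ρ ^ 2 * σ ^ 2 / (2 * b) ≤
      ((n : ℝ) ^ b * (n : ℝ) ^ b)⁻¹ *
        ∑ I : Fin b → Fin n, ∑ J : Fin b → Fin n,
          ⟪batchGrad g I (w + ρ • batchGrad g J w), fullGrad g w⟫ := by
  have hn' : (0 : ℝ) < n := by exact_mod_cast hn
  have hb' : (0 : ℝ) < b := by exact_mod_cast hb
  have hN : (0 : ℝ) < (n : ℝ) ^ b := by positivity
  set G := fullGrad g w with hG
  have hmean : ∀ x, ∑ I : Fin b → Fin n, ⟪batchGrad g I x, G⟫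
      = (n : ℝ) ^ b * ⟪fullGrad g x, G⟫ := by
    intro x
    have h := aux_mean (fun i => ⟪g i x, G⟫) b
    simp only [batchGrad, fullGrad, real_inner_smul_left, sum_inner]
    rw [← Finset.mul_sum]
    field_simp
    linarith
  have hvarb : ∑ J : Fin b → Fin n, ‖batchGrad g J w - G‖ ^ 2 ≤ (n : ℝ) ^ b * (σ ^ 2 / b) := by
    have h0 : ∑ i, (g i w - G) = 0 := by
      rw [Finset.sum_sub_distrib, hG, fullGrad]
      simp only [Finset.sum_const, Finset.card_univ, Fintype.card_fin]
      rw [← Nat.cast_smul_eq_nsmul ℝ, smul_smul, mul_inv_cancel₀ hn'.ne', one_smul, sub_self]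
    have h := aux_var (fun i => g i w - G) h0 b
    have e : ∀ J : Fin b → Fin n, ‖batchGrad g J w - G‖ ^ 2
        = ((b : ℝ)⁻¹) ^ 2 * ‖∑ k, (g (J k) w - G)‖ ^ 2 := by
      intro J
      have : batchGrad g J w - G = (b : ℝ)⁻¹ • ∑ k, (g (J k) w - G) := by
        rw [Finset.sum_sub_distrib, smul_sub, batchGrad]
        simp only [Finset.sum_const, Finset.card_univ, Fintype.card_fin]
        rw [← Nat.cast_smul_eq_nsmul ℝ, smul_smul, inv_mul_cancel₀ hb'.ne', one_smul]
      rw [this, norm_smul, mul_pow, Real.norm_eq_abs, sq_abs]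
    simp only [e]
    rw [← Finset.mul_sum]
    have hv := hvar w
    have h2 : ∑ J : Fin b → Fin n, ‖∑ k, (g (J k) w - G)‖ ^ 2
        = b * (n : ℝ) ^ b * ((n : ℝ)⁻¹ * ∑ i, ‖g i w - G‖ ^ 2) := by
      field_simp
      linarith
    rw [h2]
    calc ((b : ℝ)⁻¹) ^ 2 * (b * (n : ℝ) ^ b * ((n : ℝ)⁻¹ * ∑ i, ‖g i w - G‖ ^ 2))
        ≤ ((b : ℝ)⁻¹) ^ 2 * (b * (n : ℝ) ^ b * σ ^ 2) := by gcongr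
      _ = _ := by field_simp
  have hL : ∀ x y, ‖fullGrad g x - fullGrad g y‖ ≤ β * ‖x - y‖ := by
    intro x y
    have := hLip.dist_le_mul x y
    rwa [dist_eq_norm, dist_eq_norm, Real.coe_toNNReal β hβ.le] at this
  have hpt : ∀ J : Fin b → Fin n,
      (1 / 2 - β * ρ) * ‖G‖ ^ 2 - β ^ 2 * ρ ^ 2 / 2 * ‖batchGrad g J w - G‖ ^ 2
        ≤ ⟪fullGrad g (w + ρ • batchGrad g J w), G⟫ := by
    intro J
    set u := fullGrad g (w + ρ • batchGrad g J w)
    set v := fullGrad g (w + ρ • G)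
    have h1 : ‖u - v‖ ≤ β * (ρ * ‖batchGrad g J w - G‖) := by
      refine (hL _ _).trans_eq ?_
      rw [add_sub_add_left_eq_sub, ← smul_sub, norm_smul, Real.norm_of_nonneg hρ]
    have h2 : ‖v - G‖ ≤ β * (ρ * ‖G‖) := by
      refine (hL _ _).trans_eq ?_
      rw [add_sub_cancel_left, norm_smul, Real.norm_of_nonneg hρ]
    have e : ⟪u, G⟫ = ⟪u - v, G⟫ + ⟪v - G, G⟫ + ‖G‖ ^ 2 := by
      rw [← real_inner_self_eq_norm_sq, ← inner_add_left, ← inner_add_left]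
      congr 1
      abel
    have h3 := (abs_le.mp (abs_real_inner_le_norm (u - v) G)).1
    have h4 := (abs_le.mp (abs_real_inner_le_norm (v - G) G)).1
    have h5 : ‖v - G‖ * ‖G‖ ≤ β * (ρ * ‖G‖) * ‖G‖ := by gcongr
    have h6 : ‖u - v‖ ^ 2 ≤ (β * (ρ * ‖batchGrad g J w - G‖)) ^ 2 := by gcongr
    rw [e]
    nlinarith [sq_nonneg (‖u - v‖ - ‖G‖)]
  rw [Finset.sum_comm]
  simp only [hmean]
  rw [← Finset.mul_sum]
  have hs := Finset.sum_le_sum (fun J (_ : J ∈ (Finset.univ : Finset (Fin b → Fin n))) => hpt J)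
  rw [Finset.sum_sub_distrib] at hs
  simp only [Finset.sum_const, Finset.card_univ, Fintype.card_fin, Fintype.card_fun,
    nsmul_eq_mul, Nat.cast_pow] at hs
  have hc : 0 ≤ β ^ 2 * ρ ^ 2 / 2 := by positivity
  have hm := mul_le_mul_of_nonneg_left hvarb hc
  rw [Finset.mul_sum] at hm
  rw [mul_inv, mul_assoc ((n : ℝ) ^ b)⁻¹, inv_mul_cancel_left₀ hN.ne', le_inv_mul_iff₀ hN]
  refine le_trans (le_of_eq ?_) ((sub_le_sub_left hm _).trans hs)
  field_simp
end

section
/- Assume each ℓ_i is differentiable, ∇L is β-Lipschitz with β > 0, and the bounded variance condition (A1) holds with constant σ ≥ 0. Fix a batch size b ≥ 1, step sizes 0 ≤ γ ≤ 1/(2β) and 0 ≤ ρ ≤ 1/(2β), and a point w ∈ ℝ^d. For batches I, J ∈ {1,…,n}^b define the n-SAM step w⁺(I,J) = w − γ∇L_I(w + ρ∇L_J(w)). Then, averaging uniformly over all pairs (I, J), E_{I,J} L(w⁺(I,J)) ≤ L(w) − (γ/4)·‖∇L(w)‖² + γβ(σ²/b)(γ + ρ²β). -/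
open scoped RealInnerProductSpace

theorem aux_descent {d : ℕ} (f : EuclideanSpace ℝ (Fin d) → ℝ)
    (G : EuclideanSpace ℝ (Fin d) → EuclideanSpace ℝ (Fin d))
    (hf : ∀ x, HasGradientAt f (G x) x) (β : ℝ) (hβ : 0 < β)
    (hL : ∀ x y, ‖G x - G y‖ ≤ β * ‖x - y‖) (w v : EuclideanSpace ℝ (Fin d)) :
    f (w + v) ≤ f w + ⟪G w, v⟫ + β / 2 * ‖v‖ ^ 2 := by
  have hd : ∀ t : ℝ, HasDerivAt
      (fun t : ℝ => f (w + t • v) - t * ⟪G w, v⟫ - β / 2 * ‖v‖ ^ 2 * t ^ 2)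
      (⟪G (w + t • v), v⟫ - ⟪G w, v⟫ - β * ‖v‖ ^ 2 * t) t := by
    intro t
    have h1 : HasDerivAt (fun t : ℝ => w + t • v) v t := by
      simpa using ((hasDerivAt_id t).smul_const v).const_add w
    have h2 := (hf (w + t • v)).hasFDerivAt.comp_hasDerivAt t h1
    have h3 := (h2.sub ((hasDerivAt_id t).mul_const ⟪G w, v⟫)).sub
      ((hasDerivAt_pow 2 t).const_mul (β / 2 * ‖v‖ ^ 2))
    refine HasDerivAt.congr_deriv h3 ?_
    simp
    ring
  have hanti : AntitoneOn
      (fun t : ℝ => f (w + t • v) - t * ⟪G w, v⟫ - β / 2 * ‖v‖ ^ 2 * t ^ 2) (Set.Ici 0) := by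
    apply antitoneOn_of_deriv_nonpos (convex_Ici 0)
    · exact fun t _ => (hd t).continuousAt.continuousWithinAt
    · exact fun t _ => (hd t).differentiableAt.differentiableWithinAt
    · intro t ht
      rw [interior_Ici] at ht
      have ht : 0 < t := ht
      rw [(hd t).deriv, ← inner_sub_left]
      have h1 := real_inner_le_norm (G (w + t • v) - G w) v
      have h2 := hL (w + t • v) w
      rw [add_sub_cancel_left, norm_smul, Real.norm_of_nonneg ht.le] at h2
      nlinarith [mul_le_mul_of_nonneg_right h2 (norm_nonneg v)]
  have := hanti (Set.mem_Ici.2 le_rfl) (Set.mem_Ici.2 zero_le_one) zero_le_one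
  simp at this
  linarith

theorem aux_centered {d n : ℕ} (c : Fin n → EuclideanSpace ℝ (Fin d)) (hc : ∑ i, c i = 0)
    (s : ℝ) (hs : ∑ i, ‖c i‖ ^ 2 ≤ n * s) (b : ℕ) :
    (∑ J : Fin b → Fin n, ∑ k, c (J k) = 0) ∧
    (∑ J : Fin b → Fin n, ‖∑ k, c (J k)‖ ^ 2 ≤ b * (n : ℝ) ^ b * s) := by
  induction b with
  | zero => simp
  | succ b ih =>
    obtain ⟨h1, h2⟩ := ih
    constructor
    · rw [← (Fin.consEquiv (fun _ => Fin n)).sum_comp, Fintype.sum_prod_type]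
      simp [Fin.consEquiv, Fin.sum_univ_succ, Finset.sum_add_distrib, h1, ← Finset.smul_sum, hc]
    · rw [← (Fin.consEquiv (fun _ => Fin n)).sum_comp, Fintype.sum_prod_type]
      simp only [Fin.consEquiv, Fin.sum_univ_succ, Equiv.coe_fn_mk, Fin.cons_zero, Fin.cons_succ,
        norm_add_sq_real, Finset.sum_add_distrib, ← Finset.mul_sum, ← inner_sum, h1]
      simp [← Finset.mul_sum]
      have h3 := mul_le_mul_of_nonneg_left hs (by positivity : (0:ℝ) ≤ (n:ℝ) ^ b)
      have h4 := mul_le_mul_of_nonneg_left h2 (by positivity : (0:ℝ) ≤ (n:ℝ))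
      rw [pow_succ]
      nlinarith

theorem aux_batch {d n b : ℕ} (hn : 0 < n) (hb : 1 ≤ b)
    (g : Fin n → EuclideanSpace ℝ (Fin d) → EuclideanSpace ℝ (Fin d)) (s : ℝ)
    (x : EuclideanSpace ℝ (Fin d))
    (hvar : (n : ℝ)⁻¹ * ∑ i, ‖g i x - fullGrad g x‖ ^ 2 ≤ s) :
    (∑ J : Fin b → Fin n, batchGrad g J x = (n : ℝ) ^ b • fullGrad g x) ∧
    (∑ J : Fin b → Fin n, ‖batchGrad g J x‖ ^ 2 ≤
      (n : ℝ) ^ b * (‖fullGrad g x‖ ^ 2 + s / b)) := by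
  have hn' : (0:ℝ) < n := by exact_mod_cast hn
  have hb' : (0:ℝ) < b := by exact_mod_cast hb
  have hc : ∑ i, (g i x - fullGrad g x) = 0 := by
    rw [Finset.sum_sub_distrib]
    simp [fullGrad, ← Nat.cast_smul_eq_nsmul ℝ, smul_smul, hn'.ne']
  have hs : ∑ i, ‖g i x - fullGrad g x‖ ^ 2 ≤ n * s := by
    rwa [inv_mul_le_iff₀ hn'] at hvar
  obtain ⟨h1, h2⟩ := aux_centered _ hc s hs b
  have hJ : ∀ J : Fin b → Fin n, batchGrad g J x =
      fullGrad g x + (b:ℝ)⁻¹ • ∑ k, (g (J k) x - fullGrad g x) := by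
    intro J
    rw [Finset.sum_sub_distrib, smul_sub]
    simp [batchGrad, ← Nat.cast_smul_eq_nsmul ℝ, smul_smul, hb'.ne']
  constructor
  · simp only [hJ, Finset.sum_add_distrib, ← Finset.smul_sum, h1]
    simp [← Nat.cast_smul_eq_nsmul ℝ]
  · simp only [hJ, norm_add_sq_real, Finset.sum_add_distrib, ← Finset.mul_sum, ← inner_sum,
      ← Finset.smul_sum, h1, norm_smul, mul_pow]
    simp [-Finset.sum_sub_distrib]
    have h4 := mul_le_mul_of_nonneg_left h2 (by positivity : (0:ℝ) ≤ ((b:ℝ) ^ 2)⁻¹)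
    have : ((b:ℝ) ^ 2)⁻¹ * (b * (n : ℝ) ^ b * s) = (n:ℝ)^b * (s / b) := by
      field_simp
    linarith

theorem nsam_stochastic_descent {d n b : ℕ} (hn : 0 < n) (hb : 1 ≤ b)
    (ℓ : Fin n → EuclideanSpace ℝ (Fin d) → ℝ)
    (g : Fin n → EuclideanSpace ℝ (Fin d) → EuclideanSpace ℝ (Fin d))
    (hg : ∀ i x, HasGradientAt (ℓ i) (g i x) x)
    (β : ℝ) (hβ : 0 < β) (hLip : LipschitzWith β.toNNReal (fullGrad g))
    (σ : ℝ) (hσ : 0 ≤ σ)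
    (hvar : ∀ x, (n : ℝ)⁻¹ * ∑ i, ‖g i x - fullGrad g x‖ ^ 2 ≤ σ ^ 2)
    (γ ρ : ℝ) (hγ0 : 0 ≤ γ) (hγ1 : γ ≤ 1 / (2 * β)) (hρ0 : 0 ≤ ρ) (hρ1 : ρ ≤ 1 / (2 * β))
    (w : EuclideanSpace ℝ (Fin d)) :
    ((n : ℝ) ^ b * (n : ℝ) ^ b)⁻¹ *
        ∑ I : Fin b → Fin n, ∑ J : Fin b → Fin n,
          fullLoss ℓ (w - γ • batchGrad g I (w + ρ • batchGrad g J w)) ≤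
      fullLoss ℓ w - γ / 4 * ‖fullGrad g w‖ ^ 2 + γ * β * (σ ^ 2 / b) * (γ + ρ ^ 2 * β) := by
  have hn' : (0:ℝ) < n := by exact_mod_cast hn
  have hb' : (0:ℝ) < b := by exact_mod_cast hb
  have hL : ∀ x y, ‖fullGrad g x - fullGrad g y‖ ≤ β * ‖x - y‖ := by
    intro x y
    have := hLip.dist_le_mul x y
    rwa [dist_eq_norm, dist_eq_norm, Real.coe_toNNReal _ hβ.le] at this
  have hG : ∀ x, HasGradientAt (fullLoss ℓ) (fullGrad g x) x := by
    intro x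
    rw [hasGradientAt_iff_hasFDerivAt]
    have h := (HasFDerivAt.fun_sum (u := Finset.univ)
      (fun i _ => (hg i x).hasFDerivAt)).const_mul (n:ℝ)⁻¹
    refine HasFDerivAt.congr_fderiv h ?_
    simp [fullGrad]
  have hγβ : γ * β ≤ 1 / 2 := by
    rw [le_div_iff₀ (by positivity)] at hγ1
    linarith
  have hρβ : ρ * β ≤ 1 / 2 := by
    rw [le_div_iff₀ (by positivity)] at hρ1
    linarith
  have hρβ2 : (ρ * β) ^ 2 ≤ 1 / 4 := by
    have := pow_le_pow_left₀ (by positivity) hρβ 2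
    linarith
  set N : ℝ := (n:ℝ) ^ b with hN
  have hNp : 0 < N := by positivity
  have hs : 0 ≤ σ ^ 2 / b := by positivity
  set s : ℝ := σ ^ 2 / b with hsdef
  set G := fullGrad g w with hGdef
  have hinner : ∀ J : Fin b → Fin n,
      ∑ I : Fin b → Fin n, fullLoss ℓ (w - γ • batchGrad g I (w + ρ • batchGrad g J w)) ≤
      N * (fullLoss ℓ w - γ / 2 * ‖G‖ ^ 2 + γ / 2 * ((ρ * β) ^ 2 * ‖batchGrad g J w‖ ^ 2)
        + γ ^ 2 * β / 2 * s) := by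
    intro J
    set x := w + ρ • batchGrad g J w with hx
    obtain ⟨h1, h2⟩ := aux_batch hn hb g (σ ^ 2) x (hvar x)
    have h3 : ∑ I : Fin b → Fin n, fullLoss ℓ (w - γ • batchGrad g I x) ≤
        ∑ I : Fin b → Fin n, (fullLoss ℓ w - γ * ⟪G, batchGrad g I x⟫
          + β / 2 * γ ^ 2 * ‖batchGrad g I x‖ ^ 2) := by
      apply Finset.sum_le_sum
      intro I _
      have := aux_descent _ _ hG β hβ hL w (-(γ • batchGrad g I x))
      rw [← sub_eq_add_neg, inner_neg_right, inner_smul_right, norm_neg, norm_smul, mul_pow,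
        Real.norm_eq_abs, sq_abs] at this
      linarith
    rw [Finset.sum_add_distrib, Finset.sum_sub_distrib, ← Finset.mul_sum, ← Finset.mul_sum,
      ← inner_sum, h1, inner_smul_right] at h3
    simp only [Finset.sum_const, Finset.card_univ, Fintype.card_pi, Fintype.card_fin,
      Finset.prod_const, nsmul_eq_mul, Nat.cast_pow] at h3
    rw [← hN] at h3 h2
    have h4 := mul_le_mul_of_nonneg_left h2 (by positivity : 0 ≤ β / 2 * γ ^ 2)
    have h5 := norm_sub_sq_real (fullGrad g x) G
    rw [real_inner_comm] at h5
    have h6 : ‖fullGrad g x - G‖ ^ 2 ≤ (ρ * β) ^ 2 * ‖batchGrad g J w‖ ^ 2 := by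
      have := hL x w
      rw [hx, add_sub_cancel_left, norm_smul, Real.norm_of_nonneg hρ0, ← hx] at this
      have := pow_le_pow_left₀ (norm_nonneg _) this 2
      nlinarith
    have h7 : γ * β * γ * ‖fullGrad g x‖ ^ 2 ≤ γ * ‖fullGrad g x‖ ^ 2 := by
      have : γ * β * (γ * ‖fullGrad g x‖ ^ 2) ≤ 1 * (γ * ‖fullGrad g x‖ ^ 2) :=
        mul_le_mul_of_nonneg_right (by linarith) (by positivity)
      linarith
    have h8 := mul_le_mul_of_nonneg_left h6 hγ0
    have key : fullLoss ℓ w - γ * ⟪G, fullGrad g x⟫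
        + β / 2 * γ ^ 2 * (‖fullGrad g x‖ ^ 2 + s) ≤
      fullLoss ℓ w - γ / 2 * ‖G‖ ^ 2 + γ / 2 * ((ρ * β) ^ 2 * ‖batchGrad g J w‖ ^ 2)
        + γ ^ 2 * β / 2 * s := by
      rw [h5] at h8
      linarith
    have key2 := mul_le_mul_of_nonneg_left key hNp.le
    linarith
  rw [Finset.sum_comm, inv_mul_le_iff₀ (by positivity)]
  refine (Finset.sum_le_sum fun J _ => hinner J).trans ?_
  rw [← Finset.mul_sum, mul_assoc N N]
  refine mul_le_mul_of_nonneg_left ?_ hNp.le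
  obtain ⟨-, h2⟩ := aux_batch hn hb g (σ ^ 2) w (hvar w)
  rw [Finset.sum_add_distrib, Finset.sum_add_distrib, ← Finset.mul_sum, ← Finset.mul_sum]
  simp only [Finset.sum_const, Finset.card_univ, Fintype.card_pi, Fintype.card_fin,
      Finset.prod_const, nsmul_eq_mul, Nat.cast_pow]
  rw [← hN] at h2 ⊢
  have h3 := mul_le_mul_of_nonneg_left h2 (by positivity : 0 ≤ γ / 2 * (ρ * β) ^ 2)
  have h4 : γ * (ρ * β) ^ 2 * ‖G‖ ^ 2 ≤ γ * (1 / 4) * ‖G‖ ^ 2 := by gcongr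
  have h5 : 0 ≤ γ * (ρ * β) ^ 2 * s := by positivity
  have h6 : 0 ≤ γ ^ 2 * β * s := by positivity
  have h7 : 0 ≤ γ * ‖G‖ ^ 2 := by positivity
  have key : fullLoss ℓ w - γ / 2 * ‖G‖ ^ 2 + γ / 2 * (ρ * β) ^ 2 * (‖G‖ ^ 2 + s)
      + γ ^ 2 * β / 2 * s ≤
      fullLoss ℓ w - γ / 4 * ‖G‖ ^ 2 + γ * β * s * (γ + ρ ^ 2 * β) := by
    linarith
  have key2 := mul_le_mul_of_nonneg_left key hNp.le
  linarith
end

section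
/- Assume each ℓ_i is differentiable, ∇L is β-Lipschitz with β > 0, L is bounded below with infimum L*, and (A1) holds with constant σ ≥ 0. Fix a batch size b ≥ 1, a horizon T ≥ 16, and step sizes γ = 1/(√T·β), ρ = 1/(T^{1/4}·β). From any w_0, define for each sequence of batch pairs ((I_0,J_0),…,(I_{T−1},J_{T−1})) the stochastic n-SAM iterates w_{t+1} = w_t − γ∇L_{I_t}(w_t + ρ∇L_{J_t}(w_t)). Then, averaging uniformly over all such batch-pair sequences, (1/T)·E[∑_{t=0}^{T−1} ‖∇L(w_t)‖²] ≤ (4β/√T)·(L(w_0) − L*) + 8σ²/(b√T). -/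
open scoped RealInnerProductSpace

lemma resample {ι α E : Type*} [Fintype ι] [DecidableEq ι] [Fintype α] [AddCommMonoid E]
    (t : ι) (f : (ι → α) → E) :
    ∑ S : ι → α, ∑ B : α, f (Function.update S t B) = Fintype.card α • ∑ S : ι → α, f S := by
  have hinv : Function.Involutive
      (fun p : (ι → α) × α => ((Function.update p.1 t p.2, p.1 t) : (ι → α) × α)) := by
    rintro ⟨S, B⟩
    simp
  have h := Equiv.sum_comp hinv.toPerm (fun p : (ι → α) × α => f p.1)
  rw [Fintype.sum_prod_type, Fintype.sum_prod_type] at h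
  simp only [Function.Involutive.coe_toPerm] at h
  rw [h, Finset.smul_sum]
  simp

lemma batch_zero_sum {d n b : ℕ} (u : Fin n → EuclideanSpace ℝ (Fin d)) (hn : 0 < n)
    (hu : ∑ i, u i = 0) (k : Fin b) : ∑ J : Fin b → Fin n, u (J k) = 0 := by
  have h := resample k (fun J : Fin b → Fin n => u (J k))
  simp only [Function.update_self, hu, Finset.sum_const_zero, Fintype.card_fin] at h
  rw [← Nat.cast_smul_eq_nsmul ℝ] at h
  have h2 := (smul_eq_zero.mp h.symm)
  rcases h2 with h2 | h2
  · exact absurd (Nat.cast_eq_zero.mp h2) hn.ne'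
  · exact h2

lemma batch_diag {d n b : ℕ} (u : Fin n → EuclideanSpace ℝ (Fin d)) (k : Fin b) :
    (n : ℝ) * ∑ J : Fin b → Fin n, ‖u (J k)‖ ^ 2
      = (Fintype.card (Fin b → Fin n) : ℝ) * ∑ i, ‖u i‖ ^ 2 := by
  have h := resample k (fun J : Fin b → Fin n => ‖u (J k)‖ ^ 2)
  simp only [Function.update_self, Finset.sum_const, Finset.card_univ, nsmul_eq_mul] at h
  rw [h]; simp

lemma batch_off {d n b : ℕ} (u : Fin n → EuclideanSpace ℝ (Fin d)) (hn : 0 < n)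
    (hu : ∑ i, u i = 0) (k l : Fin b) (hkl : l ≠ k) :
    ∑ J : Fin b → Fin n, ⟪u (J k), u (J l)⟫ = 0 := by
  have h := resample k (fun J : Fin b → Fin n => ⟪u (J k), u (J l)⟫)
  simp only [Function.update_self, Function.update_of_ne hkl, ← sum_inner, hu, inner_zero_left,
    Finset.sum_const_zero, Fintype.card_fin] at h
  rcases (smul_eq_zero.mp h.symm) with h2 | h2
  · omega
  · exact h2

lemma batch_sq {d n b : ℕ} (u : Fin n → EuclideanSpace ℝ (Fin d)) (hn : 0 < n)
    (hu : ∑ i, u i = 0) :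
    ∑ J : Fin b → Fin n, ‖∑ k, u (J k)‖ ^ 2
      = (b : ℝ) * ((Fintype.card (Fin b → Fin n) : ℝ) * ((n : ℝ)⁻¹ * ∑ i, ‖u i‖ ^ 2)) := by
  have hn' : (n : ℝ) ≠ 0 := by positivity
  have h1 : ∀ k : Fin b, ∑ l : Fin b, ∑ J : Fin b → Fin n, ⟪u (J k), u (J l)⟫
      = (Fintype.card (Fin b → Fin n) : ℝ) * ((n : ℝ)⁻¹ * ∑ i, ‖u i‖ ^ 2) := by
    intro k
    rw [Finset.sum_eq_single k (fun l _ hl => batch_off u hn hu k l hl) (by simp)]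
    simp only [real_inner_self_eq_norm_sq]
    have := batch_diag u k
    field_simp
    linarith
  have h2 : ∀ J : Fin b → Fin n, ‖∑ k, u (J k)‖ ^ 2 = ∑ k, ∑ l, ⟪u (J k), u (J l)⟫ := by
    intro J
    rw [← real_inner_self_eq_norm_sq, sum_inner]
    simp only [inner_sum]
  simp only [h2]
  rw [Finset.sum_comm]
  have h3 : ∀ k : Fin b, ∑ J : Fin b → Fin n, ∑ l, ⟪u (J k), u (J l)⟫
      = (Fintype.card (Fin b → Fin n) : ℝ) * ((n : ℝ)⁻¹ * ∑ i, ‖u i‖ ^ 2) := by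
    intro k
    rw [Finset.sum_comm, h1]
  rw [Finset.sum_congr rfl (fun k _ => h3 k)]
  simp

section
variable {d n b : ℕ} (hn : 0 < n) (hb : 1 ≤ b)
    (g : Fin n → EuclideanSpace ℝ (Fin d) → EuclideanSpace ℝ (Fin d))

lemma centered_sum (hn : 0 < n)
    (g : Fin n → EuclideanSpace ℝ (Fin d) → EuclideanSpace ℝ (Fin d))
    (x : EuclideanSpace ℝ (Fin d)) :
    ∑ i, (g i x - fullGrad g x) = 0 := by
  have hn' : (n : ℝ) ≠ 0 := by positivity
  rw [Finset.sum_sub_distrib]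
  simp only [fullGrad, Finset.sum_const, Finset.card_univ, Fintype.card_fin]
  rw [← Nat.cast_smul_eq_nsmul ℝ, smul_smul, mul_inv_cancel₀ hn', one_smul, sub_self]

lemma batch_centered (hb : 1 ≤ b)
    (g : Fin n → EuclideanSpace ℝ (Fin d) → EuclideanSpace ℝ (Fin d))
    (x : EuclideanSpace ℝ (Fin d)) (J : Fin b → Fin n) :
    batchGrad g J x = fullGrad g x + (b : ℝ)⁻¹ • ∑ k, (g (J k) x - fullGrad g x) := by
  have hb' : (b : ℝ) ≠ 0 := by positivity
  rw [Finset.sum_sub_distrib]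
  simp only [Finset.sum_const, Finset.card_univ, Fintype.card_fin]
  rw [← Nat.cast_smul_eq_nsmul ℝ, smul_sub, smul_smul, inv_mul_cancel₀ hb', one_smul, batchGrad]
  abel

lemma batch_mean (hn : 0 < n) (hb : 1 ≤ b)
    (g : Fin n → EuclideanSpace ℝ (Fin d) → EuclideanSpace ℝ (Fin d))
    (x : EuclideanSpace ℝ (Fin d)) :
    ∑ J : Fin b → Fin n, batchGrad g J x
      = (Fintype.card (Fin b → Fin n) : ℝ) • fullGrad g x := by
  simp only [batch_centered hb g x]
  rw [Finset.sum_add_distrib, ← Finset.smul_sum, Finset.sum_comm,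
    Finset.sum_congr rfl (fun k _ => batch_zero_sum (fun i => g i x - fullGrad g x) hn
      (centered_sum hn g x) k)]
  rw [Finset.sum_const, Finset.sum_const_zero, smul_zero, add_zero, Nat.cast_smul_eq_nsmul,
    Finset.card_univ]

lemma batch_second (hn : 0 < n) (hb : 1 ≤ b)
    (g : Fin n → EuclideanSpace ℝ (Fin d) → EuclideanSpace ℝ (Fin d))
    (σ : ℝ) (x : EuclideanSpace ℝ (Fin d))
    (hvar : (n : ℝ)⁻¹ * ∑ i, ‖g i x - fullGrad g x‖ ^ 2 ≤ σ ^ 2) :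
    ∑ J : Fin b → Fin n, ‖batchGrad g J x‖ ^ 2
      ≤ (Fintype.card (Fin b → Fin n) : ℝ) * (‖fullGrad g x‖ ^ 2 + σ ^ 2 / b) := by
  have hb' : (0 : ℝ) < b := by positivity
  have hz : ∑ J : Fin b → Fin n, ((b : ℝ)⁻¹ • ∑ k, (g (J k) x - fullGrad g x)) = 0 := by
    rw [← Finset.smul_sum, Finset.sum_comm,
      Finset.sum_congr rfl (fun k _ => batch_zero_sum (fun i => g i x - fullGrad g x) hn
      (centered_sum hn g x) k)]
    simp
  have hs := batch_sq (b := b) (fun i => g i x - fullGrad g x) hn (centered_sum hn g x)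
  simp only [batch_centered hb g x, norm_add_sq_real, Finset.sum_add_distrib]
  rw [← Finset.mul_sum, ← inner_sum, hz]
  simp only [norm_smul, mul_pow]
  rw [← Finset.mul_sum, hs, inner_zero_right, Finset.sum_const, Finset.card_univ, nsmul_eq_mul,
    norm_inv, Real.norm_natCast]
  have hN : (0 : ℝ) ≤ (Fintype.card (Fin b → Fin n) : ℝ) := by positivity
  generalize (Fintype.card (Fin b → Fin n) : ℝ) = N at *
  generalize (n : ℝ)⁻¹ * ∑ i, ‖g i x - fullGrad g x‖ ^ 2 = V at *
  have : (b : ℝ)⁻¹ ^ 2 * (b * (N * V)) = N * (V / b) := by field_simp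
  rw [this, mul_zero, add_zero, mul_add]
  gcongr
end

lemma descent {d : ℕ} (L : EuclideanSpace ℝ (Fin d) → ℝ)
    (G : EuclideanSpace ℝ (Fin d) → EuclideanSpace ℝ (Fin d))
    (hG : ∀ x, HasGradientAt L (G x) x) (β : ℝ) (hβ : 0 < β)
    (hL : ∀ x y, ‖G x - G y‖ ≤ β * ‖x - y‖) (x v : EuclideanSpace ℝ (Fin d)) :
    L (x + v) ≤ L x + ⟪G x, v⟫ + β / 2 * ‖v‖ ^ 2 := by
  have hd : ∀ t : ℝ, HasDerivAt
      (fun t : ℝ => L (x + t • v) - t * ⟪G x, v⟫ - β / 2 * ‖v‖ ^ 2 * t ^ 2)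
      (⟪G (x + t • v), v⟫ - ⟪G x, v⟫ - β * ‖v‖ ^ 2 * t) t := by
    intro t
    have h1 : HasDerivAt (fun t : ℝ => x + t • v) v t := by
      simpa using ((hasDerivAt_id t).smul_const v).const_add x
    have h2 := (hG (x + t • v)).hasFDerivAt.comp_hasDerivAt t h1
    have h3 := (h2.sub ((hasDerivAt_id t).mul_const ⟪G x, v⟫)).sub
      (((hasDerivAt_id t).pow 2).const_mul (β / 2 * ‖v‖ ^ 2))
    have e : ⟪G (x + t • v), v⟫ - ⟪G x, v⟫ - β * ‖v‖ ^ 2 * t =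
        ((InnerProductSpace.toDual ℝ (EuclideanSpace ℝ (Fin d))) (G (x + t • v))) v
          - 1 * ⟪G x, v⟫ - β / 2 * ‖v‖ ^ 2 * (((2 : ℕ) : ℝ) * id t ^ (2 - 1) * 1) := by
      rw [InnerProductSpace.toDual_apply_apply]
      simp only [id]
      push_cast
      ring
    rw [e]
    exact h3
  have hanti : AntitoneOn
      (fun t : ℝ => L (x + t • v) - t * ⟪G x, v⟫ - β / 2 * ‖v‖ ^ 2 * t ^ 2) (Set.Icc 0 1) := by
    apply antitoneOn_of_deriv_nonpos (convex_Icc 0 1)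
    · exact fun t _ => (hd t).continuousAt.continuousWithinAt
    · exact fun t _ => (hd t).differentiableAt.differentiableWithinAt
    · intro t ht
      rw [interior_Icc] at ht
      rw [(hd t).deriv, ← inner_sub_left]
      have h1 := real_inner_le_norm (G (x + t • v) - G x) v
      have h2 := hL (x + t • v) x
      rw [add_sub_cancel_left, norm_smul, Real.norm_of_nonneg ht.1.le] at h2
      nlinarith [mul_le_mul_of_nonneg_right h2 (norm_nonneg v)]
  have := hanti (Set.left_mem_Icc.2 zero_le_one) (Set.right_mem_Icc.2 zero_le_one) zero_le_one
  simp at this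
  linarith

lemma fullLoss_grad {d n : ℕ} (ℓ : Fin n → EuclideanSpace ℝ (Fin d) → ℝ)
    (g : Fin n → EuclideanSpace ℝ (Fin d) → EuclideanSpace ℝ (Fin d))
    (hg : ∀ i x, HasGradientAt (ℓ i) (g i x) x) (x : EuclideanSpace ℝ (Fin d)) :
    HasGradientAt (fullLoss ℓ) (fullGrad g x) x := by
  rw [hasGradientAt_iff_hasFDerivAt]
  have h := (HasFDerivAt.fun_sum (u := Finset.univ)
    (fun i _ => (hg i x).hasFDerivAt)).const_mul ((n : ℝ)⁻¹)
  have e : (InnerProductSpace.toDual ℝ (EuclideanSpace ℝ (Fin d))) (fullGrad g x) =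
      (n : ℝ)⁻¹ • ∑ i, (InnerProductSpace.toDual ℝ (EuclideanSpace ℝ (Fin d))) (g i x) := by
    simp [fullGrad, map_sum]
  rw [e]
  exact h

lemma one_step {d n b : ℕ} (hn : 0 < n) (hb : 1 ≤ b)
    (ℓ : Fin n → EuclideanSpace ℝ (Fin d) → ℝ)
    (g : Fin n → EuclideanSpace ℝ (Fin d) → EuclideanSpace ℝ (Fin d))
    (hg : ∀ i x, HasGradientAt (ℓ i) (g i x) x)
    (β : ℝ) (hβ : 0 < β) (hLip : LipschitzWith β.toNNReal (fullGrad g))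
    (σ : ℝ)
    (hvar : ∀ x, (n : ℝ)⁻¹ * ∑ i, ‖g i x - fullGrad g x‖ ^ 2 ≤ σ ^ 2)
    (γ ρ a : ℝ) (hγ : 0 ≤ γ) (ha : γ * β = a) (hρ : (β * ρ) ^ 2 = a) (ha4 : a ≤ 1 / 4)
    (x : EuclideanSpace ℝ (Fin d)) :
    ∑ B : (Fin b → Fin n) × (Fin b → Fin n),
      fullLoss ℓ (x - γ • batchGrad g B.1 (x + ρ • batchGrad g B.2 x))
    ≤ (Fintype.card ((Fin b → Fin n) × (Fin b → Fin n)) : ℝ) *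
      (fullLoss ℓ x - 3 / 8 * γ * ‖fullGrad g x‖ ^ 2 + γ * a * (σ ^ 2 / b)) := by
  have hL : ∀ x y, ‖fullGrad g x - fullGrad g y‖ ≤ β * ‖x - y‖ := by
    intro x y
    have := hLip.norm_sub_le x y
    rwa [Real.coe_toNNReal β hβ.le] at this
  have hs : 0 ≤ σ ^ 2 / b := by positivity
  set s := σ ^ 2 / b with hsdef
  set N : ℝ := (Fintype.card (Fin b → Fin n) : ℝ) with hN
  have hN0 : 0 ≤ N := by positivity
  have ha0 : 0 ≤ a := by rw [← hρ]; positivity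
  rw [Fintype.sum_prod_type_right, Fintype.card_prod]
  push_cast
  rw [← hN]
  have inner_bd : ∀ J : Fin b → Fin n,
      ∑ I : Fin b → Fin n, fullLoss ℓ (x - γ • batchGrad g I (x + ρ • batchGrad g J x))
      ≤ N * (fullLoss ℓ x + γ * (a / 2 * ‖batchGrad g J x‖ ^ 2 - 1 / 2 * ‖fullGrad g x‖ ^ 2)
          + γ * a * s / 2) := by
    intro J
    set y := x + ρ • batchGrad g J x with hy
    have h1 : ∀ I : Fin b → Fin n, fullLoss ℓ (x - γ • batchGrad g I y) ≤
        fullLoss ℓ x - γ * ⟪fullGrad g x, batchGrad g I y⟫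
          + β / 2 * γ ^ 2 * ‖batchGrad g I y‖ ^ 2 := by
      intro I
      have := descent _ _ (fullLoss_grad ℓ g hg) β hβ hL x (-(γ • batchGrad g I y))
      rw [← sub_eq_add_neg, inner_neg_right, norm_neg, norm_smul, real_inner_smul_right,
        mul_pow, Real.norm_eq_abs, sq_abs] at this
      linarith
    have h2 := Finset.sum_le_sum (fun I (_ : I ∈ Finset.univ) => h1 I)
    rw [Finset.sum_add_distrib, Finset.sum_sub_distrib, ← Finset.mul_sum, ← Finset.mul_sum,
      ← inner_sum, batch_mean hn hb, Finset.sum_const, Finset.card_univ, nsmul_eq_mul, ← hN,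
      real_inner_smul_right] at h2
    have h3 := batch_second hn hb g σ y (hvar y)
    rw [← hN, ← hsdef] at h3
    have h4 := mul_le_mul_of_nonneg_left h3 (by positivity : 0 ≤ β / 2 * γ ^ 2)
    have h5 : ‖fullGrad g y - fullGrad g x‖ ^ 2 ≤ a * ‖batchGrad g J x‖ ^ 2 := by
      have := hL y x
      rw [hy, add_sub_cancel_left, norm_smul] at this
      have h6 := pow_le_pow_left₀ (norm_nonneg _) this 2
      rw [mul_pow, mul_pow, Real.norm_eq_abs, sq_abs] at h6
      rw [← hρ, mul_pow, mul_assoc]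
      exact h6
    rw [norm_sub_sq_real, real_inner_comm] at h5
    have h7 : N * fullLoss ℓ x - γ * (N * ⟪fullGrad g x, fullGrad g y⟫)
        + β / 2 * γ ^ 2 * (N * (‖fullGrad g y‖ ^ 2 + s))
        ≤ N * (fullLoss ℓ x + γ * (a / 2 * ‖batchGrad g J x‖ ^ 2 - 1 / 2 * ‖fullGrad g x‖ ^ 2)
          + γ * a * s / 2) := by
      have e : β / 2 * γ ^ 2 = γ * a / 2 := by rw [← ha]; ring
      rw [e]
      have h8 : - ⟪fullGrad g x, fullGrad g y⟫ + a / 2 * ‖fullGrad g y‖ ^ 2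
          ≤ a / 2 * ‖batchGrad g J x‖ ^ 2 - 1 / 2 * ‖fullGrad g x‖ ^ 2 := by
        nlinarith [sq_nonneg ‖fullGrad g y‖]
      have h9 := mul_le_mul_of_nonneg_left h8 (mul_nonneg hN0 hγ)
      linarith
    linarith
  refine (Finset.sum_le_sum (fun J _ => inner_bd J)).trans ?_
  rw [← Finset.mul_sum, mul_assoc N N]
  refine mul_le_mul_of_nonneg_left ?_ hN0
  have h3 := batch_second hn hb g σ x (hvar x)
  rw [← hN, ← hsdef] at h3
  rw [Finset.sum_add_distrib, Finset.sum_add_distrib, ← Finset.mul_sum, Finset.sum_sub_distrib,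
    ← Finset.mul_sum]
  simp only [Finset.sum_const, Finset.card_univ, nsmul_eq_mul, ← hN]
  have h4 := mul_le_mul_of_nonneg_left h3 (by positivity : 0 ≤ γ * (a / 2))
  have h5 : γ * N * (a / 2 * ‖fullGrad g x‖ ^ 2) ≤ γ * N * (1 / 8 * ‖fullGrad g x‖ ^ 2) := by
    have h6 : a / 2 ≤ 1 / 8 := by linarith
    exact mul_le_mul_of_nonneg_left (mul_le_mul_of_nonneg_right h6 (sq_nonneg _))
      (mul_nonneg hγ hN0)
  linarith

/-- Convergence of stochastic n-SAM: under (A1), `β`-Lipschitzness of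
`∇L` (`β > 0`), boundedness below of `L` with infimum `L*`, horizon `T ≥ 16`, and step sizes
`γ = 1/(√T·β)`, `ρ = 1/(T^{1/4}·β)`, iterating
`w_{t+1} = w_t − γ∇L_{I_t}(w_t + ρ∇L_{J_t}(w_t))` from `w_0` and averaging uniformly over all
batch-pair sequences,
`(1/T)·E[∑_{t<T} ‖∇L(w_t)‖²] ≤ (4β/√T)(L(w_0) − L*) + 8σ²/(b√T)`. -/
theorem nsam_stochastic_convergence {d n b : ℕ} (hn : 0 < n) (hb : 1 ≤ b)
    (ℓ : Fin n → EuclideanSpace ℝ (Fin d) → ℝ)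
    (g : Fin n → EuclideanSpace ℝ (Fin d) → EuclideanSpace ℝ (Fin d))
    (hg : ∀ i x, HasGradientAt (ℓ i) (g i x) x)
    (β : ℝ) (hβ : 0 < β) (hLip : LipschitzWith β.toNNReal (fullGrad g))
    (σ : ℝ) (hσ : 0 ≤ σ)
    (hvar : ∀ x, (n : ℝ)⁻¹ * ∑ i, ‖g i x - fullGrad g x‖ ^ 2 ≤ σ ^ 2)
    (Lstar : ℝ) (hinf : IsGLB (Set.range (fullLoss ℓ)) Lstar)
    (T : ℕ) (hT : 16 ≤ T)
    (γ ρ : ℝ) (hγ : γ = 1 / (Real.sqrt T * β)) (hρ : ρ = 1 / ((T : ℝ) ^ ((1 : ℝ) / 4) * β))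
    (w0 : EuclideanSpace ℝ (Fin d))
    (W : (Fin T → ((Fin b → Fin n) × (Fin b → Fin n))) → ℕ → EuclideanSpace ℝ (Fin d))
    (hW0 : ∀ S, W S 0 = w0)
    (hWrec : ∀ S, ∀ t : Fin T,
      W S ((t : ℕ) + 1) =
        W S (t : ℕ) - γ • batchGrad g (S t).1 (W S (t : ℕ) + ρ • batchGrad g (S t).2 (W S (t : ℕ)))) :
    (1 / (T : ℝ)) *
        ((Fintype.card (Fin T → ((Fin b → Fin n) × (Fin b → Fin n))) : ℝ)⁻¹ *
          ∑ S : Fin T → ((Fin b → Fin n) × (Fin b → Fin n)),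
            ∑ t ∈ Finset.range T, ‖fullGrad g (W S t)‖ ^ 2) ≤
      4 * β / Real.sqrt T * (fullLoss ℓ w0 - Lstar) + 8 * σ ^ 2 / (b * Real.sqrt T) := by
  have hT0 : (0 : ℝ) < T := by positivity
  have hr0 : 0 < Real.sqrt T := Real.sqrt_pos.2 hT0
  have hr4 : 4 ≤ Real.sqrt T := by
    apply Real.le_sqrt_of_sq_le
    have : (16 : ℝ) ≤ T := by exact_mod_cast hT
    linarith
  have hrr : Real.sqrt T * Real.sqrt T = T := Real.mul_self_sqrt hT0.le
  have hq : ((T : ℝ) ^ ((1 : ℝ) / 4)) ^ 2 = Real.sqrt T := by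
    rw [← Real.rpow_natCast, ← Real.rpow_mul hT0.le, Real.sqrt_eq_rpow]
    norm_num
  have hγ0 : 0 < γ := by rw [hγ]; positivity
  have ha : γ * β = 1 / Real.sqrt T := by rw [hγ]; field_simp
  have hq0 : 0 < (T : ℝ) ^ ((1 : ℝ) / 4) := by positivity
  have hρ2 : (β * ρ) ^ 2 = 1 / Real.sqrt T := by
    rw [← hq, hρ]; field_simp
  have ha4 : 1 / Real.sqrt T ≤ 1 / 4 := one_div_le_one_div_of_le (by norm_num) hr4
  have step := one_step hn hb ℓ g hg β hβ hLip σ hvar γ ρ _ hγ0.le ha hρ2 ha4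
  set s := σ ^ 2 / b with hs
  have hs0 : 0 ≤ s := by positivity
  haveI : Nonempty (Fin n) := ⟨⟨0, hn⟩⟩
  have hK : (0 : ℝ) < (Fintype.card ((Fin b → Fin n) × (Fin b → Fin n)) : ℝ) := by
    exact_mod_cast Fintype.card_pos
  have hM : (0 : ℝ) < (Fintype.card (Fin T → ((Fin b → Fin n) × (Fin b → Fin n))) : ℝ) := by
    exact_mod_cast Fintype.card_pos
  -- causality
  have caus : ∀ (t : Fin T) S B, ∀ k : ℕ, k ≤ (t : ℕ) →
      W (Function.update S t B) k = W S k := by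
    intro t S B k
    induction k with
    | zero => intro _; rw [hW0, hW0]
    | succ k ih =>
      intro hk
      have hkT : k < T := by omega
      have h1 := hWrec (Function.update S t B) ⟨k, hkT⟩
      have h2 := hWrec S ⟨k, hkT⟩
      have hne : (⟨k, hkT⟩ : Fin T) ≠ t := by
        intro h
        rw [← h] at hk
        simp at hk
      rw [Function.update_of_ne hne] at h1
      simp only at h1 h2
      rw [ih (by omega)] at h1
      rw [h1, h2]
  have stepS : ∀ t : Fin T, ∑ S, fullLoss ℓ (W S ((t : ℕ) + 1)) ≤
      ∑ S, (fullLoss ℓ (W S t) - 3 / 8 * γ * ‖fullGrad g (W S t)‖ ^ 2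
        + γ * (1 / Real.sqrt T) * s) := by
    intro t
    have h := resample t (fun S => fullLoss ℓ (W S ((t : ℕ) + 1)))
    have h2 : ∀ S B, fullLoss ℓ (W (Function.update S t B) ((t : ℕ) + 1))
        = fullLoss ℓ (W S t - γ • batchGrad g B.1 (W S t + ρ • batchGrad g B.2 (W S t))) := by
      intro S B
      rw [hWrec, caus t S B t le_rfl, Function.update_self]
    simp only [h2] at h
    rw [nsmul_eq_mul] at h
    have h3 := Finset.sum_le_sum (fun S (_ : S ∈ Finset.univ) => step (W S t))
    rw [h, ← Finset.mul_sum] at h3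
    exact le_of_mul_le_mul_left h3 hK
  set M : ℝ := (Fintype.card (Fin T → ((Fin b → Fin n) × (Fin b → Fin n))) : ℝ) with hMd
  have tele : ∀ k : ℕ, k ≤ T → ∑ S, fullLoss ℓ (W S k) +
      3 / 8 * γ * ∑ S, ∑ t ∈ Finset.range k, ‖fullGrad g (W S t)‖ ^ 2
      ≤ M * fullLoss ℓ w0 + M * (k * (γ * (1 / Real.sqrt T) * s)) := by
    intro k
    induction k with
    | zero => intro _; simp [hW0, hMd]
    | succ k ih =>
      intro hk
      have h1 := ih (by omega)
      have h2 := stepS ⟨k, by omega⟩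
      simp only [Finset.sum_add_distrib, Finset.sum_sub_distrib, ← Finset.mul_sum,
        Finset.sum_const, Finset.card_univ, nsmul_eq_mul, ← hMd] at h2
      simp only [Finset.sum_range_succ, Finset.sum_add_distrib]
      push_cast
      linarith
  have fin := tele T le_rfl
  have low : M * Lstar ≤ ∑ S, fullLoss ℓ (W S T) := by
    have := Finset.card_nsmul_le_sum Finset.univ (fun S => fullLoss ℓ (W S T)) Lstar
      (fun S _ => hinf.1 ⟨_, rfl⟩)
    rwa [nsmul_eq_mul, Finset.card_univ] at this
  have hΔ : 0 ≤ fullLoss ℓ w0 - Lstar := sub_nonneg.2 (hinf.1 ⟨_, rfl⟩)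
  generalize ∑ S, ∑ t ∈ Finset.range T, ‖fullGrad g (W S t)‖ ^ 2 = Q at *
  set Δ := fullLoss ℓ w0 - Lstar with hΔd
  have key : 3 / 8 * γ * (M⁻¹ * Q) ≤ Δ + T * (γ * (1 / Real.sqrt T) * s) := by
    have : 3 / 8 * γ * (M⁻¹ * Q) = M⁻¹ * (3 / 8 * γ * Q) := by ring
    rw [this, inv_mul_le_iff₀ hM, hΔd]
    linarith
  generalize M⁻¹ * Q = P at *
  have e2 : 8 * σ ^ 2 / (b * Real.sqrt T) = 8 * s / Real.sqrt T := by
    rw [hs]; field_simp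
  rw [e2]
  set r := Real.sqrt T with hr
  rw [← hrr] at key ⊢
  have key2 : 3 / 8 * P ≤ r * β * Δ + r * s := by
    rw [hγ] at key
    have := mul_le_mul_of_nonneg_left key (by positivity : 0 ≤ r * β)
    have e3 : r * β * (3 / 8 * (1 / (r * β)) * P) = 3 / 8 * P := by field_simp
    have e4 : r * β * (Δ + r * r * (1 / (r * β) * (1 / r) * s)) = r * β * Δ + r * s := by
      field_simp
    rwa [e3, e4] at this
  have e5 : 4 * β / r * Δ + 8 * s / r = (1 / (r * r)) * (4 * (r * β * Δ) + 8 * (r * s)) := by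
    field_simp
  rw [e5]
  have p1 : 0 ≤ r * β * Δ := by positivity
  have p2 : 0 ≤ r * s := by positivity
  refine mul_le_mul_of_nonneg_left ?_ (by positivity)
  linarith
end

section
/- Assume each ℓ_i is differentiable with β-Lipschitz gradient (individual β-smoothness, β > 0) and (A1) holds with constant σ ≥ 0. Fix a batch size b ≥ 1, step sizes 0 < γ ≤ 1/β and 0 ≤ ρ ≤ 1/(4β), and a horizon T ≥ 1. From any w_0, define for each batch sequence (J_0,…,J_{T−1}) ∈ ({1,…,n}^b)^T the stochastic m-SAM iterates w_{t+1} = w_t − γ∇L_{J_t}(w_t + ρ∇L_{J_t}(w_t)). Then, averaging uniformly over all batch sequences, (1/T)·E[∑_{t=0}^{T−1} ‖∇L(w_t)‖²] ≤ (8/(3Tγ))·(L(w_0) − E[L(w_T)]) + (8σ²β(γ + 2ρ²β))/(3b). -/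
open scoped RealInnerProductSpace

lemma msam_descent {E : Type*} [NormedAddCommGroup E] [InnerProductSpace ℝ E] [CompleteSpace E]
    (f : E → ℝ) (g : E → E) (hg : ∀ x, HasGradientAt f (g x) x) (β : ℝ)
    (hL : ∀ x y, ‖g x - g y‖ ≤ β * ‖x - y‖) (x v : E) :
    f (x + v) ≤ f x + inner ℝ (g x) v + β / 2 * ‖v‖ ^ 2 := by
  have hder : ∀ t : ℝ, HasDerivAt
      (fun t : ℝ => f (x + t • v) - t * inner ℝ (g x) v - β / 2 * t ^ 2 * ‖v‖ ^ 2)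
      (inner ℝ (g (x + t • v)) v - inner ℝ (g x) v - β * t * ‖v‖ ^ 2) t := by
    intro t
    have h1 : HasDerivAt (fun t : ℝ => x + t • v) v t := by
      simpa using ((hasDerivAt_id t).smul_const v).const_add x
    have h2 := (hg (x + t • v)).hasFDerivAt.comp_hasDerivAt t h1
    have h3 : HasDerivAt (fun t : ℝ => t * inner ℝ (g x) v) (inner ℝ (g x) v) t := by
      simpa using (hasDerivAt_id t).mul_const (inner ℝ (g x) v)
    have h4 : HasDerivAt (fun t : ℝ => β / 2 * t ^ 2 * ‖v‖ ^ 2) (β * t * ‖v‖ ^ 2) t := by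
      have h := ((hasDerivAt_pow 2 t).const_mul (β / 2)).mul_const (‖v‖ ^ 2)
      refine h.congr_deriv ?_
      push_cast
      ring
    have h5 := (h2.sub h3).sub h4
    refine h5.congr_deriv ?_
    simp
  have hanti : AntitoneOn
      (fun t : ℝ => f (x + t • v) - t * inner ℝ (g x) v - β / 2 * t ^ 2 * ‖v‖ ^ 2)
      (Set.Icc 0 1) := by
    apply antitoneOn_of_deriv_nonpos (convex_Icc 0 1)
    · exact fun t _ => (hder t).continuousAt.continuousWithinAt
    · exact fun t _ => (hder t).differentiableAt.differentiableWithinAt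
    · intro t ht
      rw [interior_Icc] at ht
      rw [(hder t).deriv, ← inner_sub_left]
      have h1 := real_inner_le_norm (g (x + t • v) - g x) v
      have h2 := hL (x + t • v) x
      rw [add_sub_cancel_left, norm_smul, Real.norm_eq_abs, abs_of_pos ht.1] at h2
      have h3 := mul_le_mul_of_nonneg_right h2 (norm_nonneg v)
      nlinarith
  have := hanti (Set.left_mem_Icc.2 zero_le_one) (Set.right_mem_Icc.2 zero_le_one) zero_le_one
  simp at this
  linarith

lemma msam_cons_sum {M : Type*} [AddCommMonoid M] {n b : ℕ} (F : (Fin (b + 1) → Fin n) → M) :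
    ∑ J, F J = ∑ i : Fin n, ∑ J : Fin b → Fin n, F (Fin.cons i J) := by
  rw [← Fintype.sum_prod_type' (f := fun i J => F (Fin.cons i J))]
  exact (Fintype.sum_equiv (Fin.consEquiv (fun _ : Fin (b + 1) => Fin n)) _ _ (fun _ => rfl)).symm

lemma msam_sum_zero {E : Type*} [NormedAddCommGroup E] [InnerProductSpace ℝ E] {n : ℕ}
    (Y : Fin n → E) (hY : ∑ i, Y i = 0) (b : ℕ) :
    ∑ J : Fin b → Fin n, ∑ k, Y (J k) = 0 := by
  induction b with
  | zero => simp
  | succ b ih =>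
    rw [msam_cons_sum]
    simp only [Fin.sum_univ_succ, Fin.cons_zero, Fin.cons_succ, Finset.sum_add_distrib, ih]
    simp [← Finset.smul_sum, hY]

lemma msam_sum_sq {E : Type*} [NormedAddCommGroup E] [InnerProductSpace ℝ E] {n : ℕ}
    (Y : Fin n → E) (hY : ∑ i, Y i = 0) (b : ℕ) :
    (n : ℝ) * ∑ J : Fin b → Fin n, ‖∑ k, Y (J k)‖ ^ 2 = b * n ^ b * ∑ i, ‖Y i‖ ^ 2 := by
  induction b with
  | zero => simp
  | succ b ih =>
    rw [msam_cons_sum]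
    simp only [Fin.sum_univ_succ, Fin.cons_zero, Fin.cons_succ, norm_add_sq_real,
      Finset.sum_add_distrib]
    simp only [← Finset.mul_sum, ← inner_sum, msam_sum_zero Y hY b]
    simp only [inner_zero_right, Finset.sum_const, Finset.card_univ, Fintype.card_fun,
      Fintype.card_fin, nsmul_eq_mul, ← Finset.mul_sum]
    simp only [mul_zero, add_zero, mul_add, ih]
    push_cast
    ring

lemma msam_update_sum {ι B : Type*} [Fintype ι] [DecidableEq ι] [Fintype B]
    (t : ι) (F : (ι → B) → ℝ) [Fintype (ι → B)] :
    ∑ S : ι → B, ∑ J : B, F (Function.update S t J) = (Fintype.card B : ℝ) * ∑ S, F S := by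
  have hinv : Function.Involutive
      (fun p : (ι → B) × B => (Function.update p.1 t p.2, p.1 t)) := by
    rintro ⟨S, J⟩
    simp
  have h := Fintype.sum_equiv hinv.toPerm (fun p => F (Function.update p.1 t p.2))
    (fun p => F p.1) (fun _ => rfl)
  rw [Fintype.sum_prod_type, Fintype.sum_prod_type] at h
  rw [h]
  simp [Finset.mul_sum]

lemma msam_pointwise {E : Type*} [NormedAddCommGroup E] [InnerProductSpace ℝ E]
    (G X D : E) (a r : ℝ) (ha0 : 0 ≤ a) (ha1 : a ≤ 1) (hr0 : 0 ≤ r) (hr : r ≤ 1 / 4)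
    (hD : ‖D‖ ≤ r * ‖G + X‖) :
    - inner ℝ G (G + X + D) + a / 2 * ‖G + X + D‖ ^ 2 ≤
      - (3 / 8) * ‖G‖ ^ 2 + (a + 2 * r ^ 2) * ‖X‖ ^ 2
        + (a * 2 * r ^ 2 + (1 - a) * (r ^ 2 - 1)) * inner ℝ G X := by
  have hD2 : ‖D‖ ^ 2 ≤ r ^ 2 * (‖G‖ ^ 2 + 2 * inner ℝ G X + ‖X‖ ^ 2) := by
    rw [← norm_add_sq_real, ← mul_pow]
    gcongr
  have h1 : 0 ≤ ‖G + D‖ ^ 2 := by positivity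
  have h2 : 0 ≤ ‖X - D‖ ^ 2 := by positivity
  have e3 : ‖G + X + D‖ ^ 2 = ‖G‖ ^ 2 + 2 * inner ℝ G X + ‖X‖ ^ 2
      + 2 * (inner ℝ G D + inner ℝ X D) + ‖D‖ ^ 2 := by
    rw [norm_add_sq_real, norm_add_sq_real, inner_add_left]
  have e4 : inner ℝ G (G + X + D) = ‖G‖ ^ 2 + inner ℝ G X + inner ℝ G D := by
    rw [inner_add_right, inner_add_right, real_inner_self_eq_norm_sq]
  rw [norm_add_sq_real] at h1
  rw [norm_sub_sq_real] at h2
  rw [e3, e4]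
  have hr2 : r ^ 2 ≤ 1 / 16 := by nlinarith
  have A1 := mul_nonneg (sub_nonneg.2 ha1) h1
  have A2 := mul_nonneg ha0 h2
  have A3 := mul_nonneg (sub_nonneg.2 ha1) (sub_nonneg.2 hD2)
  have A4 := mul_nonneg ha0 (sub_nonneg.2 hD2)
  have A5 : 0 ≤ (1 / 16 - r ^ 2) * ‖G‖ ^ 2 := mul_nonneg (by linarith) (by positivity)
  have A6 : 0 ≤ a * ((1 / 16 - r ^ 2) * ‖G‖ ^ 2) := mul_nonneg ha0 A5
  have A7 : 0 ≤ r ^ 2 * ‖X‖ ^ 2 := by positivity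
  have A8 : 0 ≤ a * (r ^ 2 * ‖X‖ ^ 2) := by positivity
  have A9 : 0 ≤ (1 - a) * (r ^ 2 * ‖X‖ ^ 2) := mul_nonneg (by linarith) A7
  have A10 : 0 ≤ (1 - a) * ‖G‖ ^ 2 := mul_nonneg (by linarith) (by positivity)
  have A11 : 0 ≤ a * ‖G‖ ^ 2 := by positivity
  have A12 : 0 ≤ (1 - a) * ((1 / 16 - r ^ 2) * ‖G‖ ^ 2) := mul_nonneg (by linarith) A5
  linarith

lemma msam_lip {d n b : ℕ} (hb : 1 ≤ b)
    (g : Fin n → EuclideanSpace ℝ (Fin d) → EuclideanSpace ℝ (Fin d)) (β : ℝ)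
    (hL : ∀ i x y, ‖g i x - g i y‖ ≤ β * ‖x - y‖) (J : Fin b → Fin n) (x y) :
    ‖batchGrad g J x - batchGrad g J y‖ ≤ β * ‖x - y‖ := by
  have hb' : (0 : ℝ) < b := by exact_mod_cast hb
  unfold batchGrad
  rw [← smul_sub, ← Finset.sum_sub_distrib, norm_smul, norm_inv, Real.norm_natCast,
    inv_mul_le_iff₀ hb']
  calc _ ≤ ∑ k : Fin b, β * ‖x - y‖ := norm_sum_le_of_le _ (fun k _ => hL _ _ _)
    _ = _ := by simp

lemma msam_full_descent {d n : ℕ} (hn : 0 < n)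
    (ℓ : Fin n → EuclideanSpace ℝ (Fin d) → ℝ)
    (g : Fin n → EuclideanSpace ℝ (Fin d) → EuclideanSpace ℝ (Fin d))
    (hg : ∀ i x, HasGradientAt (ℓ i) (g i x) x) (β : ℝ)
    (hL : ∀ i x y, ‖g i x - g i y‖ ≤ β * ‖x - y‖) (x v) :
    fullLoss ℓ (x + v) ≤ fullLoss ℓ x + inner ℝ (fullGrad g x) v + β / 2 * ‖v‖ ^ 2 := by
  have hn' : (0 : ℝ) < n := by exact_mod_cast hn
  have h := Finset.sum_le_sum (s := Finset.univ)
    (fun i _ => msam_descent (ℓ i) (g i) (hg i) β (hL i) x v)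
  have h2 := mul_le_mul_of_nonneg_left h (inv_nonneg.2 hn'.le)
  unfold fullLoss fullGrad
  refine h2.trans (le_of_eq ?_)
  rw [Finset.sum_add_distrib, Finset.sum_add_distrib, real_inner_smul_left, sum_inner]
  simp only [Finset.sum_const, Finset.card_univ, Fintype.card_fin, nsmul_eq_mul]
  field_simp

lemma msam_step {d n b : ℕ} (hn : 0 < n) (hb : 1 ≤ b)
    (ℓ : Fin n → EuclideanSpace ℝ (Fin d) → ℝ)
    (g : Fin n → EuclideanSpace ℝ (Fin d) → EuclideanSpace ℝ (Fin d))
    (hg : ∀ i x, HasGradientAt (ℓ i) (g i x) x)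
    (β : ℝ) (hβ : 0 < β) (hL : ∀ i x y, ‖g i x - g i y‖ ≤ β * ‖x - y‖)
    (σ : ℝ)
    (hvar : ∀ x, (n : ℝ)⁻¹ * ∑ i, ‖g i x - fullGrad g x‖ ^ 2 ≤ σ ^ 2)
    (γ ρ : ℝ) (hγ0 : 0 < γ) (hγ1 : γ ≤ 1 / β) (hρ0 : 0 ≤ ρ) (hρ1 : ρ ≤ 1 / (4 * β))
    (w : EuclideanSpace ℝ (Fin d)) :
    ∑ J : Fin b → Fin n, fullLoss ℓ (w - γ • batchGrad g J (w + ρ • batchGrad g J w)) ≤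
      (Fintype.card (Fin b → Fin n) : ℝ) * (fullLoss ℓ w - γ * (3 / 8) * ‖fullGrad g w‖ ^ 2
        + γ * ((γ * β + 2 * (ρ * β) ^ 2) * (σ ^ 2 / b))) := by
  have hn' : (0 : ℝ) < n := by exact_mod_cast hn
  have hb' : (0 : ℝ) < b := by exact_mod_cast hb
  have ha1 : γ * β ≤ 1 := by rwa [le_div_iff₀ hβ] at hγ1
  have hr1 : ρ * β ≤ 1 / 4 := by
    rw [le_div_iff₀ (by positivity)] at hρ1; linarith
  set G := fullGrad g w with hG
  have hY : ∑ i, (g i w - G) = 0 := by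
    rw [Finset.sum_sub_distrib, hG, fullGrad]
    simp only [Finset.sum_const, Finset.card_univ, Fintype.card_fin]
    rw [← Nat.cast_smul_eq_nsmul ℝ, smul_smul, mul_inv_cancel₀ hn'.ne', one_smul, sub_self]
  have hX : ∀ J : Fin b → Fin n, batchGrad g J w - G = (b : ℝ)⁻¹ • ∑ k, (g (J k) w - G) := by
    intro J
    rw [Finset.sum_sub_distrib, smul_sub, batchGrad]
    simp only [Finset.sum_const, Finset.card_univ, Fintype.card_fin]
    rw [← Nat.cast_smul_eq_nsmul ℝ, smul_smul, inv_mul_cancel₀ hb'.ne', one_smul]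
  have hX0 : ∑ J : Fin b → Fin n, (batchGrad g J w - G) = 0 := by
    simp only [hX]
    rw [← Finset.smul_sum, msam_sum_zero (fun i => g i w - G) hY b, smul_zero]
  have hX2 : ∑ J : Fin b → Fin n, ‖batchGrad g J w - G‖ ^ 2
      ≤ (Fintype.card (Fin b → Fin n) : ℝ) * (σ ^ 2 / b) := by
    have h1 := msam_sum_sq (fun i => g i w - G) hY b
    have h2 := hvar w
    rw [inv_mul_le_iff₀ hn'] at h2
    simp only [hX, norm_smul, mul_pow, norm_inv, Real.norm_natCast]
    rw [← Finset.mul_sum]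
    have h3 : (n : ℝ) * ∑ J : Fin b → Fin n, ‖∑ k, (g (J k) w - G)‖ ^ 2
        ≤ n * (b * n ^ b * σ ^ 2) := by
      rw [h1]
      calc _ ≤ (b : ℝ) * n ^ b * (n * σ ^ 2) := by gcongr
        _ = _ := by ring
    have h4 := le_of_mul_le_mul_left h3 hn'
    calc _ ≤ (b : ℝ)⁻¹ ^ 2 * (b * n ^ b * σ ^ 2) := by gcongr
      _ = _ := by
        simp only [Fintype.card_fun, Fintype.card_fin]
        push_cast
        field_simp
  set c := γ * β * 2 * (ρ * β) ^ 2 + (1 - γ * β) * ((ρ * β) ^ 2 - 1) with hc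
  have key : ∀ J : Fin b → Fin n,
      fullLoss ℓ (w - γ • batchGrad g J (w + ρ • batchGrad g J w)) ≤
      (fullLoss ℓ w - γ * (3 / 8) * ‖G‖ ^ 2)
        + γ * (γ * β + 2 * (ρ * β) ^ 2) * ‖batchGrad g J w - G‖ ^ 2
        + γ * c * inner ℝ G (batchGrad g J w - G) := by
    intro J
    set h := batchGrad g J (w + ρ • batchGrad g J w) with hh
    have h1 := msam_full_descent hn ℓ g hg β hL w (-(γ • h))
    have h2 := msam_pointwise G (batchGrad g J w - G) (h - batchGrad g J w) (γ * β) (ρ * β)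
      (by positivity) ha1 (by positivity) hr1 (by
        have := msam_lip hb g β hL J (w + ρ • batchGrad g J w) w
        rw [add_sub_cancel_left, norm_smul, Real.norm_eq_abs, abs_of_nonneg hρ0] at this
        rw [add_sub_cancel]
        linarith)
    have e : G + (batchGrad g J w - G) + (h - batchGrad g J w) = h := by abel
    rw [e] at h2
    rw [← sub_eq_add_neg, inner_neg_right, norm_neg, norm_smul, real_inner_smul_right,
      Real.norm_eq_abs, abs_of_pos hγ0, ← hG] at h1
    have h3 := mul_le_mul_of_nonneg_left h2 hγ0.le
    rw [← hc] at h3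
    nlinarith
  refine (Finset.sum_le_sum (fun J _ => key J)).trans ?_
  rw [Finset.sum_add_distrib, Finset.sum_add_distrib, ← Finset.mul_sum, ← Finset.mul_sum,
    ← inner_sum, hX0, inner_zero_right]
  simp only [Finset.sum_const, Finset.card_univ, nsmul_eq_mul, mul_zero, add_zero]
  have := mul_le_mul_of_nonneg_left hX2
    (show 0 ≤ γ * (γ * β + 2 * (ρ * β) ^ 2) by positivity)
  linarith

/-- Convergence of stochastic m-SAM (same batch in ascent and descent):
under individual `β`-smoothness, (A1), `0 < γ ≤ 1/β`, `0 ≤ ρ ≤ 1/(4β)`, iterating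
`w_{t+1} = w_t − γ∇L_{J_t}(w_t + ρ∇L_{J_t}(w_t))` from `w_0` and averaging uniformly over
all batch sequences,
`(1/T)·E[∑_{t<T} ‖∇L(w_t)‖²] ≤ (8/(3Tγ))(L(w_0) − E[L(w_T)]) + 8σ²β(γ + 2ρ²β)/(3b)`. -/
theorem msam_stochastic_convergence {d n b : ℕ} (hn : 0 < n) (hb : 1 ≤ b)
    (ℓ : Fin n → EuclideanSpace ℝ (Fin d) → ℝ)
    (g : Fin n → EuclideanSpace ℝ (Fin d) → EuclideanSpace ℝ (Fin d))
    (hg : ∀ i x, HasGradientAt (ℓ i) (g i x) x)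
    (β : ℝ) (hβ : 0 < β) (hLip : ∀ i, LipschitzWith β.toNNReal (g i))
    (σ : ℝ) (hσ : 0 ≤ σ)
    (hvar : ∀ x, (n : ℝ)⁻¹ * ∑ i, ‖g i x - fullGrad g x‖ ^ 2 ≤ σ ^ 2)
    (γ ρ : ℝ) (hγ0 : 0 < γ) (hγ1 : γ ≤ 1 / β) (hρ0 : 0 ≤ ρ) (hρ1 : ρ ≤ 1 / (4 * β))
    (T : ℕ) (hT : 1 ≤ T)
    (w0 : EuclideanSpace ℝ (Fin d))
    (W : (Fin T → (Fin b → Fin n)) → ℕ → EuclideanSpace ℝ (Fin d))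
    (hW0 : ∀ S, W S 0 = w0)
    (hWrec : ∀ S, ∀ t : Fin T,
      W S ((t : ℕ) + 1) =
        W S (t : ℕ) - γ • batchGrad g (S t) (W S (t : ℕ) + ρ • batchGrad g (S t) (W S (t : ℕ)))) :
    (1 / (T : ℝ)) *
        ((Fintype.card (Fin T → (Fin b → Fin n)) : ℝ)⁻¹ *
          ∑ S : Fin T → (Fin b → Fin n), ∑ t ∈ Finset.range T, ‖fullGrad g (W S t)‖ ^ 2) ≤
      8 / (3 * T * γ) *
          (fullLoss ℓ w0 -
            (Fintype.card (Fin T → (Fin b → Fin n)) : ℝ)⁻¹ *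
              ∑ S : Fin T → (Fin b → Fin n), fullLoss ℓ (W S T)) +
        8 * σ ^ 2 * β * (γ + 2 * ρ ^ 2 * β) / (3 * b) := by
  have hL : ∀ i x y, ‖g i x - g i y‖ ≤ β * ‖x - y‖ := by
    intro i x y
    have := (hLip i).dist_le_mul x y
    rwa [dist_eq_norm, dist_eq_norm, Real.coe_toNNReal _ hβ.le] at this
  have hT' : (0 : ℝ) < T := by exact_mod_cast hT
  have hb' : (0 : ℝ) < b := by exact_mod_cast hb
  haveI : Nonempty (Fin n) := ⟨⟨0, hn⟩⟩
  have hB : (0 : ℝ) < (Fintype.card (Fin b → Fin n) : ℝ) := by exact_mod_cast Fintype.card_pos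
  set N : ℝ := (Fintype.card (Fin T → (Fin b → Fin n)) : ℝ) with hN
  have hNpos : 0 < N := by rw [hN]; exact_mod_cast Fintype.card_pos
  have hcausal : ∀ (S : Fin T → (Fin b → Fin n)) (t : Fin T) (J : Fin b → Fin n) (s : ℕ),
      s ≤ t → W (Function.update S t J) s = W S s := by
    intro S t J s
    induction s with
    | zero => intro _; rw [hW0, hW0]
    | succ s ih =>
      intro hs
      have hsT : s < T := by omega
      have h1 := hWrec (Function.update S t J) ⟨s, hsT⟩
      have h2 := hWrec S ⟨s, hsT⟩
      have hne : (⟨s, hsT⟩ : Fin T) ≠ t := by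
        intro h; rw [← h] at hs; simp at hs
      rw [Function.update_of_ne hne] at h1
      simp only at h1 h2
      rw [h1, h2, ih (by omega)]
  set K : ℝ := γ * ((γ * β + 2 * (ρ * β) ^ 2) * (σ ^ 2 / b)) with hK
  have hstep : ∀ t ∈ Finset.range T, ∑ S, fullLoss ℓ (W S (t + 1)) ≤
      ∑ S, fullLoss ℓ (W S t) - γ * (3 / 8) * ∑ S, ‖fullGrad g (W S t)‖ ^ 2 + N * K := by
    intro t ht
    have htT := Finset.mem_range.1 ht
    have h1 := msam_update_sum (⟨t, htT⟩ : Fin T) (fun S => fullLoss ℓ (W S (t + 1)))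
    have h2 : ∀ S : Fin T → (Fin b → Fin n), ∑ J : Fin b → Fin n,
        fullLoss ℓ (W (Function.update S ⟨t, htT⟩ J) (t + 1)) ≤
        (Fintype.card (Fin b → Fin n) : ℝ) * (fullLoss ℓ (W S t)
          - γ * (3 / 8) * ‖fullGrad g (W S t)‖ ^ 2 + K) := by
      intro S
      refine le_trans (le_of_eq ?_) (msam_step hn hb ℓ g hg β hβ hL σ hvar γ ρ hγ0 hγ1 hρ0 hρ1
        (W S t))
      refine Finset.sum_congr rfl (fun J _ => ?_)
      have h3 := hWrec (Function.update S ⟨t, htT⟩ J) ⟨t, htT⟩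
      rw [Function.update_self] at h3
      simp only at h3
      rw [h3, hcausal S ⟨t, htT⟩ J t le_rfl]
    have h4 := Finset.sum_le_sum (s := Finset.univ) (fun S _ => h2 S)
    rw [h1, ← Finset.mul_sum] at h4
    have h5 := le_of_mul_le_mul_left h4 hB
    rw [Finset.sum_add_distrib, Finset.sum_sub_distrib, ← Finset.mul_sum] at h5
    simpa [hN] using h5
  have htel := Finset.sum_le_sum hstep
  rw [Finset.sum_add_distrib, Finset.sum_sub_distrib, ← Finset.mul_sum] at htel
  have htel2 := Finset.sum_range_sub (fun t => ∑ S, fullLoss ℓ (W S t)) T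
  rw [Finset.sum_sub_distrib] at htel2
  have h0 : ∑ S, fullLoss ℓ (W S 0) = N * fullLoss ℓ w0 := by simp [hW0, hN]
  rw [h0] at htel2
  rw [Finset.sum_comm]
  simp only [Finset.sum_const, Finset.card_range, nsmul_eq_mul] at htel
  set A := ∑ t ∈ Finset.range T, ∑ S, ‖fullGrad g (W S t)‖ ^ 2
  set Z := ∑ S, fullLoss ℓ (W S T)
  have hfin : γ * (3 / 8) * A ≤ N * fullLoss ℓ w0 - Z + T * (N * K) := by linarith
  have e1 : 1 / (T : ℝ) * (N⁻¹ * A) = 8 / (3 * T * γ * N) * (γ * (3 / 8) * A) := by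
    field_simp
  have e2 : 8 / (3 * T * γ) * (fullLoss ℓ w0 - N⁻¹ * Z)
      + 8 * σ ^ 2 * β * (γ + 2 * ρ ^ 2 * β) / (3 * b)
      = 8 / (3 * T * γ * N) * (N * fullLoss ℓ w0 - Z + T * (N * K)) := by
    rw [hK]
    field_simp
  rw [e1, e2]
  gcongr
end

section
/- Let L(w) = (1/(4n))·‖Xβ(w) − y‖² on ℝ^{2d} and fix ρ ≥ 0 and α ∈ ℝ^d with all α_i > 0. Let w : [0,∞) → ℝ^{2d} be a C¹ solution of the full-batch n-SAM gradient flow w′(t) = −∇L(w(t) + ρ∇L(w(t))) with w(0) = (α, α). Set w_sam(t) = w(t) + ρ∇L(w(t)), r(t) = Xβ(w(t)) − y, and r_sam(t) = Xβ(w_sam(t)) − y. Assume the improper integrals ∫₀^∞ Xᵀ r_sam(s) ds and I := ∫₀^∞ (Xᵀ r_sam(s)) ⊙ (Xᵀ r(s)) ds converge componentwise, and that w(t) converges to some w_∞ whose predictor β_∞ = β(w_∞) interpolates the data, Xβ_∞ = y. Define α′ ∈ ℝ^d_{>0} by (α′_i)² = α_i²·exp(−(2ρ/n²)·I_i). Then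 β_∞ minimizes φ_{α′}(β) over the affine set {β ∈ ℝ^d : Xβ = y}. -/
open scoped RealInnerProductSpace

noncomputable section

/-- Linear predictor of a diagonal linear network: `β(w)ⱼ = (w₊)ⱼ² − (w₋)ⱼ²`, where the
parameter vector `v ∈ ℝ^{2d}` is indexed by `Fin d ⊕ Fin d` (`inl` = `w₊`, `inr` = `w₋`). -/
def betaOf {d : ℕ} (v : EuclideanSpace ℝ (Fin d ⊕ Fin d)) (j : Fin d) : ℝ :=
  v (Sum.inl j) ^ 2 - v (Sum.inr j) ^ 2

/-- Residual of the predictor at the `i`-th data point: `⟨β(v), xᵢ⟩ − yᵢ`. -/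
def resid {d n : ℕ} (X : Matrix (Fin n) (Fin d) ℝ) (y : Fin n → ℝ)
    (v : EuclideanSpace ℝ (Fin d ⊕ Fin d)) (i : Fin n) : ℝ :=
  ∑ j, X i j * betaOf v j - y i

/-- The squared-loss objective `L(w) = (1/(4n))‖Xβ(w) − y‖²`. -/
def nSamLoss {d n : ℕ} (X : Matrix (Fin n) (Fin d) ℝ) (y : Fin n → ℝ)
    (v : EuclideanSpace ℝ (Fin d ⊕ Fin d)) : ℝ :=
  (4 * n : ℝ)⁻¹ * ∑ i, resid X y v i ^ 2

/-- `j`-th component of `Xᵀ r(v)` where `r(v)` is the residual vector. -/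
def XTresid {d n : ℕ} (X : Matrix (Fin n) (Fin d) ℝ) (y : Fin n → ℝ)
    (v : EuclideanSpace ℝ (Fin d ⊕ Fin d)) (j : Fin d) : ℝ :=
  ∑ i, X i j * resid X y v i

/-- The n-SAM ascent point `w_sam(t) = w(t) + ρ∇L(w(t))`. -/
def nSamAscent {d n : ℕ} (X : Matrix (Fin n) (Fin d) ℝ) (y : Fin n → ℝ) (ρ : ℝ)
    (w : ℝ → EuclideanSpace ℝ (Fin d ⊕ Fin d)) (t : ℝ) : EuclideanSpace ℝ (Fin d ⊕ Fin d) :=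
  w t + ρ • gradient (nSamLoss X y) (w t)

/-- `q(z) = 2 − √(4 + z²) + z·arcsinh(z/2)`. -/
def hypq (z : ℝ) : ℝ := 2 - Real.sqrt (4 + z ^ 2) + z * Real.arsinh (z / 2)

/-- The hyperbolic-entropy potential `φ_α(β) = ∑ⱼ αⱼ² q(βⱼ/αⱼ²)`. -/
def hypEntropy {d : ℕ} (α : Fin d → ℝ) (b : Fin d → ℝ) : ℝ :=
  ∑ j, α j ^ 2 * hypq (b j / α j ^ 2)

end

noncomputable section

lemma hypq_two_sinh (a : ℝ) :
    hypq (2 * Real.sinh a) = 2 - 2 * Real.cosh a + 2 * a * Real.sinh a := by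
  unfold hypq
  have h1 : (4 : ℝ) + (2 * Real.sinh a) ^ 2 = (2 * Real.cosh a) ^ 2 := by
    have := Real.cosh_sq a
    linear_combination -4 * this
  have h2 : 2 * Real.sinh a / 2 = Real.sinh a := by ring
  rw [h1, Real.sqrt_sq (by have := Real.cosh_pos a; positivity), h2, Real.arsinh_sinh]
  ring

lemma cosh_tangent (a b : ℝ) :
    Real.cosh a + Real.sinh a * (b - a) ≤ Real.cosh b := by
  have h1 := Real.add_one_le_exp (b - a)
  have h2 := Real.add_one_le_exp (-(b - a))
  have e1 : Real.exp b = Real.exp a * Real.exp (b - a) := by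
    rw [← Real.exp_add]; congr 1; ring
  have e2 : Real.exp (-b) = Real.exp (-a) * Real.exp (-(b - a)) := by
    rw [← Real.exp_add]; congr 1; ring
  rw [Real.cosh_eq, Real.cosh_eq, Real.sinh_eq, e1, e2]
  have p1 := mul_le_mul_of_nonneg_left h1 (Real.exp_pos a).le
  have p2 := mul_le_mul_of_nonneg_left h2 (Real.exp_pos (-a)).le
  linarith

lemma hypq_tangent (b z : ℝ) :
    hypq (2 * Real.sinh b) + b * (z - 2 * Real.sinh b) ≤ hypq z := by
  obtain ⟨a, rfl⟩ : ∃ a, z = 2 * Real.sinh a :=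
    ⟨Real.arsinh (z / 2), by rw [Real.sinh_arsinh]; ring⟩
  rw [hypq_two_sinh, hypq_two_sinh]
  have := cosh_tangent a b
  linarith

/-- explicit gradient -/
def gradExp {d n : ℕ} (X : Matrix (Fin n) (Fin d) ℝ) (y : Fin n → ℝ)
    (v : EuclideanSpace ℝ (Fin d ⊕ Fin d)) : EuclideanSpace ℝ (Fin d ⊕ Fin d) :=
  WithLp.toLp 2 (Sum.elim (fun j => (n : ℝ)⁻¹ * (v (Sum.inl j) * XTresid X y v j))
    (fun j => -((n : ℝ)⁻¹ * (v (Sum.inr j) * XTresid X y v j))))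

lemma grad_eq {d n : ℕ} (X : Matrix (Fin n) (Fin d) ℝ) (y : Fin n → ℝ)
    (v : EuclideanSpace ℝ (Fin d ⊕ Fin d)) :
    gradient (nSamLoss X y) v = gradExp X y v := by
  apply HasGradientAt.gradient
  rw [hasGradientAt_iff_hasFDerivAt]
  have hp : ∀ k, HasFDerivAt (fun u : EuclideanSpace ℝ (Fin d ⊕ Fin d) => u k)
      (EuclideanSpace.proj k : EuclideanSpace ℝ (Fin d ⊕ Fin d) →L[ℝ] ℝ) v :=
    fun k => (EuclideanSpace.proj k : EuclideanSpace ℝ (Fin d ⊕ Fin d) →L[ℝ] ℝ).hasFDerivAt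
  have hb : ∀ j, HasFDerivAt (fun u : EuclideanSpace ℝ (Fin d ⊕ Fin d) => betaOf u j) _ v :=
    fun j => ((hp (Sum.inl j)).pow 2).sub ((hp (Sum.inr j)).pow 2)
  have hr : ∀ i, HasFDerivAt (fun u : EuclideanSpace ℝ (Fin d ⊕ Fin d) => resid X y u i) _ v :=
    fun i => (HasFDerivAt.fun_sum (u := Finset.univ)
      (fun j _ => (hb j).const_mul (X i j))).sub_const (y i)
  have hL := (HasFDerivAt.fun_sum (u := Finset.univ)
      (fun i _ => (hr i).pow 2)).const_mul ((4 * n : ℝ)⁻¹)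
  refine HasFDerivAt.congr_fderiv hL ?_
  ext u
  simp [gradExp, PiLp.inner_apply, XTresid, Finset.mul_sum]
  rw [Finset.sum_comm, ← Finset.sum_neg_distrib, ← Finset.sum_add_distrib]
  refine Finset.sum_congr rfl fun j _ => ?_
  rw [← Finset.sum_neg_distrib, ← Finset.sum_add_distrib]
  refine Finset.sum_congr rfl fun i _ => ?_
  ring

lemma ode_limit (c f : ℝ → ℝ) (l : ℝ) (hc : ContinuousOn c (Set.Ici 0))
    (hci : MeasureTheory.IntegrableOn c (Set.Ioi 0))
    (hf : ∀ t ∈ Set.Ici (0 : ℝ), HasDerivWithinAt f (c t * f t) (Set.Ici 0) t)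
    (hl : Filter.Tendsto f Filter.atTop (nhds l)) :
    l = f 0 * Real.exp (∫ s in Set.Ioi (0 : ℝ), c s) := by
  set c' : ℝ → ℝ := fun t => c (max t 0) with hc'
  have hc'c : Continuous c' := by
    have : Continuous (fun t : ℝ => max t 0) := by fun_prop
    exact hc.comp_continuous this (fun t => Set.mem_Ici.2 (le_max_right _ _))
  have heq : ∀ t, 0 ≤ t → c' t = c t := fun t ht => by simp [hc', max_eq_left ht]
  set E : ℝ → ℝ := fun t => ∫ s in (0 : ℝ)..t, c' s with hE
  have hEd : ∀ t, HasDerivAt E (c' t) t := fun t =>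
    intervalIntegral.integral_hasDerivAt_right (hc'c.intervalIntegrable _ _)
      hc'c.stronglyMeasurable.stronglyMeasurableAtFilter hc'c.continuousAt
  have hgd : ∀ t ∈ Set.Ici (0 : ℝ),
      HasDerivWithinAt (fun t => f t * Real.exp (-E t)) 0 (Set.Ici 0) t := by
    intro t ht
    have := (hf t ht).mul ((hEd t).neg.exp.hasDerivWithinAt (s := Set.Ici 0))
    refine this.congr_deriv ?_
    rw [heq t ht]
    simp only [Pi.neg_apply]
    ring
  have hconst : ∀ t, 0 ≤ t → f t = f 0 * Real.exp (E t) := by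
    intro t ht
    have h := constant_of_has_deriv_right_zero (f := fun t => f t * Real.exp (-E t))
      (a := 0) (b := t)
      (fun x hx => ((hgd x hx.1).continuousWithinAt).mono (fun z hz => hz.1))
      (fun x hx => (hgd x hx.1).mono (Set.Ici_subset_Ici.2 hx.1)) t ⟨ht, le_refl t⟩
    have h0 : E 0 = 0 := by simp [hE]
    simp only [h0, neg_zero, Real.exp_zero, mul_one] at h
    rw [← h, mul_assoc, ← Real.exp_add]
    simp
  have hci' : MeasureTheory.IntegrableOn c' (Set.Ioi 0) :=
    hci.congr_fun (fun t ht => (heq t (le_of_lt ht)).symm) measurableSet_Ioi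
  have hint : ∫ s in Set.Ioi (0 : ℝ), c' s = ∫ s in Set.Ioi (0 : ℝ), c s :=
    MeasureTheory.setIntegral_congr_fun measurableSet_Ioi
      (fun t ht => heq t (le_of_lt ht))
  have hlim : Filter.Tendsto E Filter.atTop (nhds (∫ s in Set.Ioi (0 : ℝ), c s)) := by
    rw [← hint]
    exact MeasureTheory.intervalIntegral_tendsto_integral_Ioi 0 hci' Filter.tendsto_id
  have h2 : Filter.Tendsto f Filter.atTop
      (nhds (f 0 * Real.exp (∫ s in Set.Ioi (0 : ℝ), c s))) := by
    refine Filter.Tendsto.congr' ?_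
      (((Real.continuous_exp.tendsto _).comp hlim).const_mul (f 0))
    filter_upwards [Filter.eventually_ge_atTop 0] with t ht
    exact (hconst t ht).symm
  exact tendsto_nhds_unique hl h2

lemma XTresid_continuous {d n : ℕ} (X : Matrix (Fin n) (Fin d) ℝ) (y : Fin n → ℝ) (j : Fin d) :
    Continuous (fun v : EuclideanSpace ℝ (Fin d ⊕ Fin d) => XTresid X y v j) := by
  unfold XTresid resid betaOf
  fun_prop

lemma gradExp_continuous {d n : ℕ} (X : Matrix (Fin n) (Fin d) ℝ) (y : Fin n → ℝ) :
    Continuous (gradExp X y) := by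
  unfold gradExp
  refine (PiLp.continuous_toLp 2 _).comp (continuous_pi fun k => ?_)
  have := fun j => XTresid_continuous X y j
  rcases k with j | j <;> simp only [Sum.elim_inl, Sum.elim_inr] <;> fun_prop

end

/-- Implicit bias of the full-batch n-SAM gradient flow for diagonal
linear networks: if the flow `w′(t) = −∇L(w(t) + ρ∇L(w(t)))` started at `w(0) = (α, α)`
converges to `w_∞` with interpolating predictor `β_∞ = β(w_∞)` (`Xβ_∞ = y`), and the stated
improper integrals converge, then `β_∞` minimizes `φ_{α′}` over `{β : Xβ = y}`, where
`(α′ⱼ)² = αⱼ²·exp(−(2ρ/n²)·∫₀^∞ (Xᵀr_sam(s))ⱼ (Xᵀr(s))ⱼ ds)`. -/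
theorem nsam_implicit_bias_diagonal_network {d n : ℕ}
    (X : Matrix (Fin n) (Fin d) ℝ) (y : Fin n → ℝ)
    (ρ : ℝ) (hρ : 0 ≤ ρ) (α : Fin d → ℝ) (hα : ∀ j, 0 < α j)
    (w : ℝ → EuclideanSpace ℝ (Fin d ⊕ Fin d))
    (hflow : ∀ t ∈ Set.Ici (0 : ℝ), HasDerivWithinAt w
      (-gradient (nSamLoss X y) (nSamAscent X y ρ w t)) (Set.Ici 0) t)
    (hinit : ∀ j, w 0 (Sum.inl j) = α j ∧ w 0 (Sum.inr j) = α j)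
    (hint1 : ∀ j : Fin d, MeasureTheory.IntegrableOn
      (fun s => XTresid X y (nSamAscent X y ρ w s) j) (Set.Ioi 0))
    (hint2 : ∀ j : Fin d, MeasureTheory.IntegrableOn
      (fun s => XTresid X y (nSamAscent X y ρ w s) j * XTresid X y (w s) j) (Set.Ioi 0))
    (winf : EuclideanSpace ℝ (Fin d ⊕ Fin d))
    (hconv : Filter.Tendsto w Filter.atTop (nhds winf))
    (hinterp : ∀ i, ∑ j, X i j * betaOf winf j = y i)
    (α' : Fin d → ℝ) (hα'pos : ∀ j, 0 < α' j)
    (hα' : ∀ j, α' j ^ 2 = α j ^ 2 * Real.exp (-(2 * ρ / (n : ℝ) ^ 2) *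
      ∫ s in Set.Ioi (0 : ℝ), XTresid X y (nSamAscent X y ρ w s) j * XTresid X y (w s) j)) :
    ∀ β' : Fin d → ℝ, (∀ i, ∑ j, X i j * β' j = y i) →
      hypEntropy α' (betaOf winf) ≤ hypEntropy α' β' := by
  intro β' hβ'
  have hwc : ContinuousOn w (Set.Ici 0) := fun t ht => (hflow t ht).continuousWithinAt
  set G : Fin d → ℝ → ℝ := fun j s => XTresid X y (nSamAscent X y ρ w s) j with hG
  set g : Fin d → ℝ → ℝ := fun j s => XTresid X y (w s) j with hg
  have hgc : ∀ j, ContinuousOn (g j) (Set.Ici 0) := fun j =>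
    (XTresid_continuous X y j).comp_continuousOn hwc
  have hac : ContinuousOn (nSamAscent X y ρ w) (Set.Ici 0) := by
    have : nSamAscent X y ρ w = fun t => w t + ρ • gradExp X y (w t) := by
      funext t; simp [nSamAscent, grad_eq]
    rw [this]
    exact hwc.add (((gradExp_continuous X y).comp_continuousOn hwc).const_smul ρ)
  have hGc : ∀ j, ContinuousOn (G j) (Set.Ici 0) := fun j =>
    (XTresid_continuous X y j).comp_continuousOn hac
  have hcomp : ∀ k, ∀ t ∈ Set.Ici (0 : ℝ), HasDerivWithinAt (fun s => w s k)
      ((-gradient (nSamLoss X y) (nSamAscent X y ρ w t)) k) (Set.Ici 0) t := fun k t ht =>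
    (EuclideanSpace.proj k : EuclideanSpace ℝ (Fin d ⊕ Fin d) →L[ℝ] ℝ).hasFDerivAt.comp_hasDerivWithinAt
      t (hflow t ht)
  have hlim : ∀ k, Filter.Tendsto (fun s => w s k) Filter.atTop (nhds (winf k)) := fun k =>
    ((EuclideanSpace.proj k : EuclideanSpace ℝ (Fin d ⊕ Fin d) →L[ℝ] ℝ).continuous.tendsto _).comp
      hconv
  set A : Fin d → ℝ := fun j => ∫ s in Set.Ioi (0 : ℝ), G j s with hA
  set I : Fin d → ℝ := fun j => ∫ s in Set.Ioi (0 : ℝ), G j s * g j s with hI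
  have hi1 : ∀ j (c : ℝ), MeasureTheory.Integrable (fun s => c * G j s)
      (MeasureTheory.volume.restrict (Set.Ioi 0)) := fun j c => (hint1 j).const_mul c
  have hi2 : ∀ j (c : ℝ), MeasureTheory.Integrable (fun s => c * (G j s * g j s))
      (MeasureTheory.volume.restrict (Set.Ioi 0)) := fun j c => (hint2 j).const_mul c
  have hplus : ∀ j, winf (Sum.inl j) =
      α j * Real.exp (-(n : ℝ)⁻¹ * A j + -(ρ / (n : ℝ) ^ 2) * I j) := by
    intro j
    have h := ode_limit (fun s => -(n : ℝ)⁻¹ * G j s + -(ρ / (n : ℝ) ^ 2) * (G j s * g j s))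
      (fun s => w s (Sum.inl j)) (winf (Sum.inl j))
      (((hGc j).const_mul _).add (((hGc j).mul (hgc j)).const_mul _))
      ((hi1 j (-(n : ℝ)⁻¹)).fun_add (hi2 j (-(ρ / (n : ℝ) ^ 2))))
      (fun t ht => (hcomp (Sum.inl j) t ht).congr_deriv (by
        rw [grad_eq]
        simp only [gradExp, PiLp.neg_apply, Sum.elim_inl]
        simp only [nSamAscent, grad_eq, gradExp, PiLp.add_apply, PiLp.smul_apply, Sum.elim_inl,
          hG, hg, smul_eq_mul]
        ring)) (hlim _)
    rw [h, MeasureTheory.integral_add (hi1 j _) (hi2 j _),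
      MeasureTheory.integral_const_mul, MeasureTheory.integral_const_mul, (hinit j).1]
  have hminus : ∀ j, winf (Sum.inr j) =
      α j * Real.exp ((n : ℝ)⁻¹ * A j + -(ρ / (n : ℝ) ^ 2) * I j) := by
    intro j
    have h := ode_limit (fun s => (n : ℝ)⁻¹ * G j s + -(ρ / (n : ℝ) ^ 2) * (G j s * g j s))
      (fun s => w s (Sum.inr j)) (winf (Sum.inr j))
      (((hGc j).const_mul _).add (((hGc j).mul (hgc j)).const_mul _))
      ((hi1 j ((n : ℝ)⁻¹)).fun_add (hi2 j (-(ρ / (n : ℝ) ^ 2))))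
      (fun t ht => (hcomp (Sum.inr j) t ht).congr_deriv (by
        rw [grad_eq]
        simp only [gradExp, PiLp.neg_apply, Sum.elim_inr]
        simp only [nSamAscent, grad_eq, gradExp, PiLp.add_apply, PiLp.smul_apply, Sum.elim_inr,
          hG, hg, smul_eq_mul]
        ring)) (hlim _)
    rw [h, MeasureTheory.integral_add (hi1 j _) (hi2 j _),
      MeasureTheory.integral_const_mul, MeasureTheory.integral_const_mul, (hinit j).2]
  have hbeta : ∀ j, betaOf winf j = α' j ^ 2 * (2 * Real.sinh (-(2 * (n : ℝ)⁻¹ * A j))) := by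
    intro j
    have e : ∀ x : ℝ, Real.exp x ^ 2 = Real.exp (2 * x) := fun x => by
      rw [← Real.exp_nat_mul]; norm_num
    rw [hα' j, betaOf, hplus, hminus, mul_pow, mul_pow, e, e, Real.sinh_eq]
    change _ = α j ^ 2 * Real.exp (-(2 * ρ / (n : ℝ) ^ 2) * I j) * _
    have e1 : Real.exp (2 * (-(n : ℝ)⁻¹ * A j + -(ρ / (n : ℝ) ^ 2) * I j)) =
        Real.exp (-(2 * ρ / (n : ℝ) ^ 2) * I j) * Real.exp (-(2 * (n : ℝ)⁻¹ * A j)) := by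
      rw [← Real.exp_add]; congr 1; ring
    have e2 : Real.exp (2 * ((n : ℝ)⁻¹ * A j + -(ρ / (n : ℝ) ^ 2) * I j)) =
        Real.exp (-(2 * ρ / (n : ℝ) ^ 2) * I j) * Real.exp (- -(2 * (n : ℝ)⁻¹ * A j)) := by
      rw [← Real.exp_add]; congr 1; ring
    rw [e1, e2]; ring
  have horth : ∑ j, A j * (β' j - betaOf winf j) = 0 := by
    have h1 : ∑ j, A j * (β' j - betaOf winf j) =
        ∫ s in Set.Ioi (0 : ℝ), ∑ j, G j s * (β' j - betaOf winf j) := by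
      rw [MeasureTheory.integral_finsetSum _ (fun j _ => (hint1 j).mul_const _)]
      exact Finset.sum_congr rfl fun j _ => (MeasureTheory.integral_mul_const _ _).symm
    have h2 : ∀ s, ∑ j, G j s * (β' j - betaOf winf j) = 0 := by
      intro s
      simp only [hG, XTresid, Finset.sum_mul]
      rw [Finset.sum_comm]
      refine Finset.sum_eq_zero fun i _ => ?_
      have : ∑ j, X i j * (β' j - betaOf winf j) = 0 := by
        simp only [mul_sub, Finset.sum_sub_distrib, hβ' i, hinterp i, sub_self]
      calc _ = resid X y (nSamAscent X y ρ w s) i * ∑ j, X i j * (β' j - betaOf winf j) := by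
            rw [Finset.mul_sum]; exact Finset.sum_congr rfl fun j _ => by ring
        _ = 0 := by rw [this, mul_zero]
    rw [h1]; simp [h2]
  have key : ∀ j, α' j ^ 2 * hypq (betaOf winf j / α' j ^ 2) +
      (-(2 * (n : ℝ)⁻¹)) * (A j * (β' j - betaOf winf j)) ≤ α' j ^ 2 * hypq (β' j / α' j ^ 2) := by
    intro j
    have hne : α' j ≠ 0 := (hα'pos j).ne'
    have hp : 0 < α' j ^ 2 := pow_pos (hα'pos j) 2
    have hz : betaOf winf j / α' j ^ 2 = 2 * Real.sinh (-(2 * (n : ℝ)⁻¹ * A j)) := by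
      rw [hbeta j]; field_simp
    have h := mul_le_mul_of_nonneg_left
      (hypq_tangent (-(2 * (n : ℝ)⁻¹ * A j)) (β' j / α' j ^ 2)) hp.le
    rw [← hz] at h
    refine le_trans (le_of_eq ?_) h
    have : α' j ^ 2 * (β' j / α' j ^ 2 - betaOf winf j / α' j ^ 2) = β' j - betaOf winf j := by
      field_simp
    linear_combination (2 * (n : ℝ)⁻¹ * A j) * this
  have hs := Finset.sum_le_sum fun j (_ : j ∈ Finset.univ) => key j
  rw [Finset.sum_add_distrib, ← Finset.mul_sum, horth, mul_zero, add_zero] at hs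
  exact hs
end
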